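/- If a C*-algebra B has property max-U and A ⊆ B is a relatively weakly injective inclusion, then A has property max-U. -/

import Mathlib

open scoped TensorProduct
open Filter Topology Function

noncomputable section

/-- A pair of commuting unital *-representations of `A` and `B` on a common C*-algebra;
these correspond exactly to the *-homomorphisms of the algebraic tensor product
`A ⊗[ℂ] B` into C*-algebras. -/
structure CommutingRepPair (A B : Type) [CStarAlgebra A] [CStarAlgebra B] : Type 1 where
  carrier : Type
  [inst : CStarAlgebra carrier]
  fst : A →⋆ₐ[ℂ] carrier
  snd : B →⋆ₐ[ℂ] carrier
  commutes : ∀ a b, Commute (fst a) (snd b)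

attribute [instance] CommutingRepPair.inst

/-- The *-homomorphism `A ⊗[ℂ] B → C` induced by a commuting pair of representations. -/
def CommutingRepPair.hom {A B : Type} [CStarAlgebra A] [CStarAlgebra B]
    (p : CommutingRepPair A B) : A ⊗[ℂ] B →ₐ[ℂ] p.carrier :=
  Algebra.TensorProduct.lift p.fst.toAlgHom p.snd.toAlgHom p.commutes

/-- The maximal tensor norm on `A ⊗[ℂ] B`: the supremum of `‖π x‖` over all
*-homomorphisms `π` of the algebraic tensor product into a C*-algebra, equivalently over
all pairs of commuting unital *-representations of `A` and `B`. -/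
def maxNorm (A B : Type) [CStarAlgebra A] [CStarAlgebra B] (x : A ⊗[ℂ] B) : ℝ :=
  sSup {r : ℝ | ∃ p : CommutingRepPair A B, r = ‖p.hom x‖}

/-- A family of elements of C*-algebras is (uniformly norm-)bounded. -/
def Bdd {I : Type} {A : I → Type} [∀ i, CStarAlgebra (A i)] (f : ∀ i, A i) : Prop :=
  ∃ M : ℝ, ∀ i, ‖f i‖ ≤ M

/-- `π : (∀ i, A i) → B` realizes `B` as the C*-algebra ultraproduct `∏_U A_i`, i.e. as
the quotient of the ℓ∞-product of the `A i` by the ideal of bounded families whose norms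
tend to `0` along `U`:  `π` is a unital *-homomorphism on bounded families, every element
of `B` lifts to a bounded family (with control of norms), and the norm of `π f` is the
`U`-limit of the norms `‖f i‖`.  This data determines `B` uniquely up to isometric
*-isomorphism. -/
structure IsCStarUltraproduct {I : Type} (U : Ultrafilter I) (A : I → Type)
    [∀ i, CStarAlgebra (A i)] (B : Type) [CStarAlgebra B]
    (π : (∀ i, A i) → B) : Prop where
  map_one : π 1 = 1
  map_add : ∀ f g, Bdd f → Bdd g → π (f + g) = π f + π g
  map_mul : ∀ f g, Bdd f → Bdd g → π (f * g) = π f * π g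
  map_star : ∀ f, Bdd f → π (star f) = star (π f)
  map_smul : ∀ (c : ℂ) f, Bdd f → π (c • f) = c • π f
  norm_eq : ∀ f, Bdd f → Tendsto (fun i => ‖f i‖) (U : Filter I) (nhds ‖π f‖)
  surj : ∀ b : B, ∃ f, (∀ i, ‖f i‖ ≤ ‖b‖) ∧ π f = b

/-- `A` has property max-`U`: for every realization of the ultrapower `A^U` and every
ultrapower tensor `Σ_k a^k ⊗ b^k` (presented by bounded families of representatives), the
norm computed in `A^U ⊗_max A^U` agrees with the norm of its natural image in
`(A ⊗_max A)^U`, i.e. the unique *-homomorphism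
`A^U ⊗_max A^U → (A ⊗_max A)^U` with `Σ a^k ⊗ b^k ↦ (Σ a^k_i ⊗ b^k_i)_U` is an isometric
embedding. -/
def HasMaxU {I : Type} (U : Ultrafilter I) (A : Type) [CStarAlgebra A] : Prop :=
  ∀ (B : Type) [CStarAlgebra B] (π : (I → A) → B),
    IsCStarUltraproduct U (fun _ => A) B π →
    ∀ (n : ℕ) (f g : Fin n → I → A), (∀ k, Bdd (f k)) → (∀ k, Bdd (g k)) →
      Tendsto (fun i => maxNorm A A (∑ k, f k i ⊗ₜ[ℂ] g k i)) (U : Filter I)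
        (nhds (maxNorm B B (∑ k, π (f k) ⊗ₜ[ℂ] π (g k))))

/-- The inclusion of `A` into `B` given by the injective *-homomorphism `j` is
relatively weakly injective: for every C*-algebra `C`, the canonical map
`A ⊗_max C → B ⊗_max C` is isometric. -/
def RWI {A B : Type} [CStarAlgebra A] [CStarAlgebra B] (j : A →⋆ₐ[ℂ] B) : Prop :=
  ∀ (C : Type) [CStarAlgebra C], ∀ x : A ⊗[ℂ] C,
    maxNorm B C (Algebra.TensorProduct.map j.toAlgHom (AlgHom.id ℂ C) x) = maxNorm A C x

/-!
The inclusion `j : A → B` induces an injective *-homomorphism `J : A^U → B^U` of ultrapowers.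
The heart of the proof is that `J` is again relatively weakly injective (`RWI.ultrapower`).
Granting this, relative weak injectivity of `j` in each entry and of `J` in the limit shows that
both sides of property max-`U` for `A` agree with the corresponding sides for `B`
(`RWI.maxNorm_sum`), where the ultrapower of `B` is realized as a quotient of the bounded families
(`exists_isCStarUltraproduct`).

Relative weak injectivity is turned into a statement about finitely many coefficients, which
passes to ultrapowers. By Hahn-Banach separation and the GNS construction, the bound
`maxNorm x < r` on an algebraic tensor product implies that `r ^ 2 - x* x` is a finite sum of
hermitian squares (`sub_star_mul_self_mem_sosCone`). For a family `d` in `C`, put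
`w k l = (d k)* (d l)`; sums of squares of tensors over `d` are the elements
`∑ P k l ⊗ w k l` with `P` a positive matrix, and elements with vanishing sum form a space cut out
by scalar relations, which do not depend on the algebra of coefficients (`exists_relations`).

What has to be transferred is therefore the following. If `X` is a hermitian matrix over `A` whose
image in `B` is positive modulo the relations, then `X + δ` is positive modulo the relations over
`A` for each `δ > 0`. For an arbitrary hermitian family `w` in a *-vector space this is
`RWI.exists_isGram`: otherwise a separating functional gives a commuting family on which relative
weak injectivity can be tested, through the extension of positive functionals
(`RWI.exists_positive_extension`). To work along an ultrafilter the positive matrices over `A` have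
to be uniformly bounded; the bound comes from adding the trace of the matrix as a further
coordinate of the family `w` (`RWI.exists_bounded`). With this bound, a solution in `B^U` lifts to
solutions in `B` for `U`-almost all entries up to a small error, these give bounded solutions in
`A`, and their classes solve the problem in `A^U` (`RWI.exists_ultrapower`).
-/

/-! ### The maximal tensor norm -/

section MaxNorm

variable {A B : Type} [CStarAlgebra A] [CStarAlgebra B]

@[simp] lemma CommutingRepPair.hom_tmul (p : CommutingRepPair A B) (a : A) (b : B) :
    p.hom (a ⊗ₜ b) = p.fst a * p.snd b := by
  simp [CommutingRepPair.hom]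

lemma CommutingRepPair.norm_hom_tmul_le (p : CommutingRepPair A B) (a : A) (b : B) :
    ‖p.hom (a ⊗ₜ b)‖ ≤ ‖a‖ * ‖b‖ := by
  rw [p.hom_tmul]
  refine (norm_mul_le _ _).trans ?_
  gcongr
  · exact NonUnitalStarAlgHom.norm_apply_le p.fst a
  · exact NonUnitalStarAlgHom.norm_apply_le p.snd b

lemma exists_norm_hom_le (x : A ⊗[ℂ] B) : ∃ M : ℝ, ∀ p : CommutingRepPair A B, ‖p.hom x‖ ≤ M := by
  induction x with
  | zero => exact ⟨0, by simp⟩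
  | tmul a b => exact ⟨‖a‖ * ‖b‖, fun p => p.norm_hom_tmul_le a b⟩
  | add x y hx hy =>
    obtain ⟨M, hM⟩ := hx
    obtain ⟨N, hN⟩ := hy
    refine ⟨M + N, fun p => ?_⟩
    rw [map_add]
    exact (norm_add_le _ _).trans (add_le_add (hM p) (hN p))

lemma CommutingRepPair.norm_hom_le (p : CommutingRepPair A B) (x : A ⊗[ℂ] B) :
    ‖p.hom x‖ ≤ maxNorm A B x := by
  obtain ⟨M, hM⟩ := exists_norm_hom_le x
  exact le_csSup ⟨M, by rintro _ ⟨q, rfl⟩; exact hM q⟩ ⟨p, rfl⟩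

lemma maxNorm_le {x : A ⊗[ℂ] B} {r : ℝ} (hr : 0 ≤ r)
    (h : ∀ p : CommutingRepPair A B, ‖p.hom x‖ ≤ r) : maxNorm A B x ≤ r := by
  refine Real.sSup_le ?_ hr
  rintro _ ⟨p, rfl⟩
  exact h p

lemma maxNorm_nonneg (x : A ⊗[ℂ] B) : 0 ≤ maxNorm A B x := by
  refine Real.sSup_nonneg ?_
  rintro _ ⟨p, rfl⟩
  exact norm_nonneg _

lemma maxNorm_add_le (x y : A ⊗[ℂ] B) :
    maxNorm A B (x + y) ≤ maxNorm A B x + maxNorm A B y := by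
  refine maxNorm_le (add_nonneg (maxNorm_nonneg _) (maxNorm_nonneg _)) fun p => ?_
  rw [map_add]
  exact (norm_add_le _ _).trans (add_le_add (p.norm_hom_le x) (p.norm_hom_le y))

lemma maxNorm_smul_le (c : ℝ) (x : A ⊗[ℂ] B) :
    maxNorm A B (c • x) ≤ |c| * maxNorm A B x := by
  refine maxNorm_le (mul_nonneg (abs_nonneg _) (maxNorm_nonneg _)) fun p => ?_
  have : p.hom (c • x) = (c : ℂ) • p.hom x := by
    rw [← map_smul]
    exact congrArg p.hom (Complex.coe_smul c x).symm
  rw [this, norm_smul, Complex.norm_real, Real.norm_eq_abs]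
  gcongr
  exact p.norm_hom_le x

lemma maxNorm_smul {c : ℝ} (hc : 0 < c) (x : A ⊗[ℂ] B) :
    maxNorm A B (c • x) = c * maxNorm A B x := by
  apply le_antisymm
  · simpa [abs_of_pos hc] using maxNorm_smul_le c x
  · have := maxNorm_smul_le c⁻¹ (c • x)
    rw [inv_smul_smul₀ hc.ne', abs_of_pos (inv_pos.2 hc)] at this
    rwa [← div_eq_inv_mul, le_div_iff₀' hc] at this

lemma tensor_star_mul (x y : A ⊗[ℂ] B) : star (x * y) = star y * star x := by
  induction x with
  | zero => simp
  | add x x' hx hx' => simp [add_mul, mul_add, hx, hx']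
  | tmul a b =>
    induction y with
    | zero => simp
    | add y y' hy hy' => simp [add_mul, mul_add, hy, hy']
    | tmul c d => simp

lemma tensor_star_one : star (1 : A ⊗[ℂ] B) = 1 := by
  simp [Algebra.TensorProduct.one_def]

lemma CommutingRepPair.hom_star (p : CommutingRepPair A B) (x : A ⊗[ℂ] B) :
    p.hom (star x) = star (p.hom x) := by
  induction x with
  | zero => simp
  | add x y hx hy => simp [hx, hy]
  | tmul a b =>
    rw [TensorProduct.star_tmul, hom_tmul, hom_tmul, star_mul, map_star, map_star]
    rw [← map_star, ← map_star]
    exact p.commutes (star a) (star b)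

/-- The maximal tensor norm does not depend on the order of the factors. -/
lemma maxNorm_comm (x : A ⊗[ℂ] B) :
    maxNorm B A (Algebra.TensorProduct.comm ℂ A B x) = maxNorm A B x := by
  have key : ∀ {A B : Type} [CStarAlgebra A] [CStarAlgebra B] (x : A ⊗[ℂ] B),
      maxNorm B A (Algebra.TensorProduct.comm ℂ A B x) ≤ maxNorm A B x := by
    intro A B _ _ x
    refine maxNorm_le (maxNorm_nonneg _) fun p => ?_
    let q : CommutingRepPair A B :=
      { carrier := p.carrier, fst := p.snd, snd := p.fst, commutes := fun a b => (p.commutes b a).symm }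
    have : p.hom (Algebra.TensorProduct.comm ℂ A B x) = q.hom x := by
      induction x with
      | zero => simp
      | add x y hx hy => simp only [map_add, hx, hy]
      | tmul a b =>
        rw [Algebra.TensorProduct.comm_tmul, p.hom_tmul, q.hom_tmul]
        exact p.commutes b a
    rw [this]
    exact q.norm_hom_le x
  refine le_antisymm (key x) ?_
  conv_lhs => rw [← (Algebra.TensorProduct.comm ℂ A B).symm_apply_apply x]
  exact key (Algebra.TensorProduct.comm ℂ A B x)

/-- Functoriality of the maximal tensor norm in the first variable. -/
lemma maxNorm_map_le {A' : Type} [CStarAlgebra A'] (j : A →⋆ₐ[ℂ] A') (x : A ⊗[ℂ] B) :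
    maxNorm A' B (Algebra.TensorProduct.map j.toAlgHom (AlgHom.id ℂ B) x) ≤ maxNorm A B x := by
  refine maxNorm_le (maxNorm_nonneg _) fun p => ?_
  let q : CommutingRepPair A B :=
    { carrier := p.carrier, fst := p.fst.comp j, snd := p.snd,
      commutes := fun a b => p.commutes (j a) b }
  have : p.hom (Algebra.TensorProduct.map j.toAlgHom (AlgHom.id ℂ B) x) = q.hom x := by
    induction x with
    | zero => simp
    | add x y hx hy => simp only [map_add, hx, hy]
    | tmul a b =>
      rw [Algebra.TensorProduct.map_tmul, p.hom_tmul, q.hom_tmul]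
      rfl
  rw [this]
  exact q.norm_hom_le x

end MaxNorm

/-! ### Hilbert spaces from semi-inner products -/

/-- A semi-inner product on a complex vector space, conjugate linear in the first variable. -/
structure IsSemiInner {V : Type} [AddCommGroup V] [Module ℂ V] (q : V → V → ℂ) : Prop where
  conj_symm : ∀ u v, starRingEnd ℂ (q v u) = q u v
  nonneg : ∀ v, 0 ≤ (q v v).re
  add_left : ∀ u v w, q (u + v) w = q u w + q v w
  smul_left : ∀ u v (c : ℂ), q (c • u) v = starRingEnd ℂ c * q u v

/-- `H` with the linear map `ι` is the Hilbert space obtained from `V` by separation and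
completion with respect to the semi-inner product `q`. -/
structure IsHilbertOf {V : Type} [AddCommGroup V] [Module ℂ V] (q : V → V → ℂ)
    {H : Type} [NormedAddCommGroup H] [InnerProductSpace ℂ H] (ι : V →ₗ[ℂ] H) : Prop where
  inner_eq : ∀ u v, inner ℂ (ι u) (ι v) = q u v
  dense : DenseRange ι

lemma IsSemiInner.exists_isHilbertOf {V : Type} [AddCommGroup V] [Module ℂ V] {q : V → V → ℂ}
    (hq : IsSemiInner q) :
    ∃ (H : Type) (_ : NormedAddCommGroup H) (_ : InnerProductSpace ℂ H) (_ : CompleteSpace H)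
      (ι : V →ₗ[ℂ] H), IsHilbertOf q ι := by
  let c : PreInnerProductSpace.Core ℂ V :=
    { inner := q
      conj_inner_symm := hq.conj_symm
      re_inner_nonneg := hq.nonneg
      add_left := hq.add_left
      smul_left := hq.smul_left }
  let : SeminormedAddCommGroup V := InnerProductSpace.Core.toSeminormedAddCommGroup (c := c)
  let : InnerProductSpace ℂ V := InnerProductSpace.ofCore c
  refine ⟨UniformSpace.Completion V, inferInstance, inferInstance, inferInstance,
    (UniformSpace.Completion.toComplL (𝕜 := ℂ) (E := V)).toLinearMap, ?_, ?_⟩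
  · intro u v
    exact UniformSpace.Completion.inner_coe u v
  · exact UniformSpace.Completion.denseRange_coe

/-- A self-adjoint element is dominated by its norm. -/
lemma exists_smul_one_sub_eq {A : Type} [CStarAlgebra A] {h : A} (hh : IsSelfAdjoint h) {M : ℝ}
    (hM : ‖h‖ ≤ M) : ∃ d : A, (M : ℂ) • (1 : A) - h = star d * d := by
  let _ := CStarAlgebra.spectralOrder A
  have _ := CStarAlgebra.spectralOrderedRing A
  refine CStarAlgebra.nonneg_iff_eq_star_mul_self.1 ?_
  have h1 : (M : ℂ) • (1 : A) = algebraMap ℝ A M := by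
    rw [Algebra.algebraMap_eq_smul_one]
    exact Complex.coe_smul M 1
  rw [h1, sub_nonneg]
  exact hh.le_algebraMap_norm_self.trans (algebraMap_mono A hM)

section Hilbert

variable {V : Type} [AddCommGroup V] [Module ℂ V] {q : V → V → ℂ}
  {H : Type} [NormedAddCommGroup H] [InnerProductSpace ℂ H] {ι : V →ₗ[ℂ] H}

lemma IsHilbertOf.norm_sq (h : IsHilbertOf q ι) (v : V) : ‖ι v‖ ^ 2 = (q v v).re := by
  rw [← h.inner_eq, ← inner_self_eq_norm_sq (𝕜 := ℂ)]
  rfl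

lemma IsHilbertOf.ext (h : IsHilbertOf q ι) {S T : H →L[ℂ] H}
    (hST : ∀ v, S (ι v) = T (ι v)) : S = T := by
  refine ContinuousLinearMap.ext fun x => ?_
  exact congrFun (h.dense.equalizer S.continuous T.continuous (funext hST)) x

lemma IsHilbertOf.exists_op [CompleteSpace H] (h : IsHilbertOf q ι) (T : V →ₗ[ℂ] V) (K : ℝ)
    (hK : ∀ v, (q (T v) (T v)).re ≤ K * (q v v).re) :
    ∃ S : H →L[ℂ] H, ∀ v, S (ι v) = ι (T v) := by
  have hb : ∀ v, ‖(ι ∘ₗ T) v‖ ≤ √K * ‖ι v‖ := by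
    intro v
    by_cases h0 : 0 ≤ K
    · refine abs_le_of_sq_le_sq' ?_ (by positivity) |>.2
      rw [mul_pow, Real.sq_sqrt h0, h.norm_sq, LinearMap.comp_apply, h.norm_sq]
      exact hK v
    · have h1 := hK v
      have h2 : 0 ≤ ‖ι v‖ ^ 2 := by positivity
      have h3 : ‖ι (T v)‖ ^ 2 ≤ 0 := by
        rw [h.norm_sq] at *
        nlinarith
      have h4 : ‖ι (T v)‖ = 0 := by nlinarith [norm_nonneg (ι (T v))]
      rw [LinearMap.comp_apply, h4]
      positivity
  refine ⟨(ι ∘ₗ T).extendOfNorm ι, fun v => ?_⟩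
  exact LinearMap.extendOfNorm_eq h.dense ⟨_, hb⟩ v

/-- A unital algebra action of a C*-algebra that is compatible with adjoints is automatically
bounded, hence induces a representation on the Hilbert space. -/
lemma IsHilbertOf.exists_rep [CompleteSpace H] (h : IsHilbertOf q ι)
    {A : Type} [CStarAlgebra A] (ℓ : A →ₐ[ℂ] Module.End ℂ V)
    (hadj : ∀ a u v, q (ℓ a u) v = q u (ℓ (star a) v)) :
    ∃ ρ : A →⋆ₐ[ℂ] (H →L[ℂ] H), ∀ a v, ρ a (ι v) = ι (ℓ a v) := by
  have hin : ∀ u v w, q u (v + w) = q u v + q u w := fun u v w => by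
    simp only [← h.inner_eq, map_add, inner_add_right]
  have hism : ∀ u v (c : ℂ), q u (c • v) = c * q u v := fun u v c => by
    simp only [← h.inner_eq, map_smul, inner_smul_right]
  have hb : ∀ a v, (q (ℓ a v) (ℓ a v)).re ≤ ‖a‖ ^ 2 * (q v v).re := by
    intro a v
    obtain ⟨d, hd⟩ := exists_smul_one_sub_eq (IsSelfAdjoint.star_mul_self a)
      (M := ‖a‖ ^ 2) (by rw [CStarRing.norm_star_mul_self, pow_two])
    have h1 : 0 ≤ (q (ℓ d v) (ℓ d v)).re := by
      rw [← h.norm_sq]; positivity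
    rw [hadj, ← Module.End.mul_apply, ← map_mul, ← hd, map_sub, LinearMap.sub_apply,
      sub_eq_add_neg, ← neg_one_smul ℂ, hin, hism] at h1
    rw [map_smul, map_one, LinearMap.smul_apply, Module.End.one_apply, hism, map_mul,
      Module.End.mul_apply, ← hadj, Complex.add_re, Complex.re_ofReal_mul] at h1
    simp at h1
    linarith
  choose m hm using fun a => h.exists_op (ℓ a) _ (hb a)
  refine ⟨{ toFun := m
            map_one' := h.ext fun v => by simp [hm]
            map_mul' := fun a b => h.ext fun v => by simp [hm]
            map_zero' := h.ext fun v => by simp [hm]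
            map_add' := fun a b => h.ext fun v => by simp [hm]
            commutes' := fun r => h.ext fun v => by
              rw [hm, AlgHom.commutes]
              simp [Algebra.algebraMap_eq_smul_one]
            map_star' := fun a => ?_ }, hm⟩
  rw [ContinuousLinearMap.star_eq_adjoint]
  refine (ContinuousLinearMap.eq_adjoint_iff _ _).mpr fun x y => ?_
  refine h.dense.induction_on₂ (p := fun x y => inner ℂ (m (star a) x) y = inner ℂ x (m a y)) ?_ ?_ x y
  · apply isClosed_eq <;> fun_prop
  · intro u v
    rw [hm, hm, h.inner_eq, h.inner_eq, hadj, star_star]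

end Hilbert

/-! ### Separation from convex cones with an order unit -/

/-- A point outside of a cone with order unit `u` is separated from the cone by a functional
normalized at `u`. -/
lemma exists_separating {V : Type} [AddCommGroup V] [Module ℝ V] (K : PointedCone ℝ V)
    (u : V) (huK : u ∈ K) (hu : ∀ v, ∃ c : ℝ, c • u + v ∈ K) {y : V} (hy : y ∉ K) :
    ∃ f : V →ₗ[ℝ] ℝ, (∀ k ∈ K, 0 ≤ f k) ∧ f u = 1 ∧ f y ≤ 0 := by
  have smul_mem : ∀ (c : ℝ), 0 ≤ c → ∀ k ∈ K, c • k ∈ K := fun c hc k hk =>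
    Submodule.smul_mem K (⟨c, hc⟩ : NNReal) hk
  -- a cone containing a negative multiple of `u` is everything
  have hnu : ∀ c : ℝ, c < 0 → c • u ∉ K := by
    intro c hc hcu
    obtain ⟨d, hd⟩ := hu y
    refine hy ?_
    have h3 : y = (d • u + y) + (-d) • u := by module
    rw [h3]
    refine K.add_mem hd ?_
    rcases le_total d 0 with h | h
    · exact smul_mem _ (by linarith) _ huK
    · have h4 : (-d) • u = (-d / c) • (c • u) := by
        rw [smul_smul, div_mul_cancel₀ _ hc.ne]
      rw [h4]
      exact smul_mem _ (div_nonneg_of_nonpos (by linarith) hc.le) _ hcu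
  have hu0 : u ≠ 0 := by
    rintro rfl
    exact hnu (-1) (by norm_num) (by simp)
  -- enlarge the cone by `-y` and extend the functional `c • u ↦ c`
  let K' : PointedCone ℝ V := K ⊔ Submodule.span NNReal {-y}
  obtain ⟨g, hg, hgK⟩ := riesz_extension K' (LinearPMap.mkSpanSingleton u (1 : ℝ) hu0) (by
    rintro ⟨x, hx⟩ hxK
    obtain ⟨c, rfl⟩ := Submodule.mem_span_singleton.1 hx
    have h1 : (LinearPMap.mkSpanSingleton u (1 : ℝ) hu0 : V →ₗ.[ℝ] ℝ) ⟨c • u, hx⟩ = c := by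
      have := LinearPMap.mkSpanSingleton'_apply (σ := RingHom.id ℝ) u (1 : ℝ)
        (fun c hc => by simp [(smul_eq_zero.1 hc).resolve_right hu0]) c hx
      simpa using this
    rw [h1]
    by_contra! hc
    obtain ⟨k, hk, z, hz, hkz⟩ := Submodule.mem_sup.1 hxK
    obtain ⟨t, rfl⟩ := Submodule.mem_span_singleton.1 hz
    change k + (t : ℝ) • -y = c • u at hkz
    rcases t.2.eq_or_lt with ht | ht
    · change 0 = (t : ℝ) at ht
      rw [← ht, zero_smul, add_zero] at hkz
      exact hnu c hc (hkz ▸ hk)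
    · change 0 < (t : ℝ) at ht
      refine hy ?_
      have h2 : y = (t : ℝ)⁻¹ • (k + (-c) • u) := by
        rw [eq_inv_smul_iff₀ ht.ne', neg_smul, ← hkz]
        module
      rw [h2]
      exact smul_mem _ (by positivity) _ (K.add_mem hk (smul_mem _ (by linarith) _ huK))) (by
    intro v
    obtain ⟨c, hc⟩ := hu v
    exact ⟨⟨c • u, Submodule.mem_span_singleton.2 ⟨c, rfl⟩⟩, Submodule.mem_sup_left hc⟩)
  refine ⟨g, fun k hk => hgK k (Submodule.mem_sup_left hk), ?_, ?_⟩
  · have := hg ⟨u, Submodule.mem_span_singleton_self u⟩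
    rw [LinearPMap.mkSpanSingleton_apply] at this
    exact this
  · have := hgK (-y) (Submodule.mem_sup_right (Submodule.mem_span_singleton_self _))
    rw [map_neg] at this
    linarith

/-- A real functional invariant under an antilinear involution is the real part of a hermitian
complex functional. -/
lemma exists_hermitian_functional {E : Type} [AddCommGroup E] [Module ℂ E] [StarAddMonoid E]
    [StarModule ℂ E] (g : E →ₗ[ℝ] ℝ) (hg : ∀ x, g (star x) = g x) :
    ∃ s : E →ₗ[ℂ] ℂ, (∀ x, (s x).re = g x) ∧ ∀ x, s (star x) = starRingEnd ℂ (s x) := by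
  have hre : ∀ x, (Module.Dual.extendRCLike (𝕜 := ℂ) g x).re = g x := fun x =>
    Module.Dual.re_extendRCLike_apply (𝕜 := ℂ) g x
  have him : ∀ x, (Module.Dual.extendRCLike (𝕜 := ℂ) g x).im = - g (Complex.I • x) := fun x =>
    Module.Dual.im_extendRCLike_apply (𝕜 := ℂ) g x
  refine ⟨Module.Dual.extendRCLike (𝕜 := ℂ) g, hre, fun x => ?_⟩
  apply Complex.ext
  · rw [Complex.conj_re, hre, hre, hg]
  · have : Complex.I • star x = - star (Complex.I • x) := by
      rw [star_smul]; simp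
    rw [Complex.conj_im, him, him, this, map_neg, hg]

/-! ### Sums of squares and the maximal tensor norm -/

section SOS

variable {A C : Type} [CStarAlgebra A] [CStarAlgebra C]

lemma real_smul_tensor (c : ℝ) (x : A ⊗[ℂ] C) : c • x = (c : ℂ) • x :=
  (Complex.coe_smul c x).symm

lemma tensor_star_real_smul (c : ℝ) (x : A ⊗[ℂ] C) : star (c • x) = c • star x := by
  rw [real_smul_tensor, real_smul_tensor, star_smul, Complex.star_def, Complex.conj_ofReal]

/-- The cone of sums of hermitian squares in the algebraic tensor product. -/
def sosCone (A C : Type) [CStarAlgebra A] [CStarAlgebra C] : AddSubmonoid (A ⊗[ℂ] C) :=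
  AddSubmonoid.closure (Set.range fun t => star t * t)

lemma star_mul_self_mem_sosCone (t : A ⊗[ℂ] C) : star t * t ∈ sosCone A C :=
  AddSubmonoid.subset_closure ⟨t, rfl⟩

lemma smul_mem_sosCone {c : ℝ} (hc : 0 ≤ c) {z : A ⊗[ℂ] C} (hz : z ∈ sosCone A C) :
    c • z ∈ sosCone A C := by
  induction hz using AddSubmonoid.closure_induction with
  | mem x hx =>
    obtain ⟨t, rfl⟩ := hx
    have : c • (star t * t) = star ((√c : ℂ) • t) * ((√c : ℂ) • t) := by
      rw [star_smul, smul_mul_smul_comm, real_smul_tensor]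
      congr 1
      rw [Complex.star_def, Complex.conj_ofReal, ← Complex.ofReal_mul, Real.mul_self_sqrt hc]
    change c • (star t * t) ∈ _
    rw [this]
    exact star_mul_self_mem_sosCone _
  | zero => simp
  | add x y _ _ hx hy => rw [smul_add]; exact add_mem hx hy

lemma one_mem_sosCone : (1 : A ⊗[ℂ] C) ∈ sosCone A C := by
  simpa [tensor_star_one] using star_mul_self_mem_sosCone (1 : A ⊗[ℂ] C)

lemma exists_smul_one_sub_mem_sosCone (x : A ⊗[ℂ] C) :
    ∃ M : ℝ, M • (1 : A ⊗[ℂ] C) + (x + star x) ∈ sosCone A C := by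
  induction x with
  | zero => exact ⟨0, by simp⟩
  | add x y hx hy =>
    obtain ⟨M, hM⟩ := hx
    obtain ⟨N, hN⟩ := hy
    refine ⟨M + N, ?_⟩
    convert add_mem hM hN using 1
    rw [star_add]
    module
  | tmul a c =>
    obtain ⟨d, hd⟩ := exists_smul_one_sub_eq (IsSelfAdjoint.mul_star_self a) le_rfl
    obtain ⟨e, he⟩ := exists_smul_one_sub_eq (IsSelfAdjoint.star_mul_self c) le_rfl
    set M := ‖a * star a‖
    set N := ‖star c * c‖
    refine ⟨M + N, ?_⟩
    have h : (M + N) • (1 : A ⊗[ℂ] C) + (a ⊗ₜ c + star (a ⊗ₜ c))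
        = star (d ⊗ₜ[ℂ] (1 : C)) * (d ⊗ₜ[ℂ] (1 : C)) + star ((1 : A) ⊗ₜ[ℂ] e) * ((1 : A) ⊗ₜ[ℂ] e)
          + star (star a ⊗ₜ[ℂ] (1 : C) + (1 : A) ⊗ₜ[ℂ] c)
            * (star a ⊗ₜ[ℂ] (1 : C) + (1 : A) ⊗ₜ[ℂ] c) := by
      simp only [star_add, TensorProduct.star_tmul, star_one, star_star, mul_add, add_mul,
        Algebra.TensorProduct.tmul_mul_tmul, mul_one, one_mul, ← hd, ← he]
      rw [TensorProduct.sub_tmul, TensorProduct.tmul_sub, ← TensorProduct.smul_tmul',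
        TensorProduct.tmul_smul, ← Algebra.TensorProduct.one_def, ← real_smul_tensor, ← real_smul_tensor]
      module
    rw [h]
    exact add_mem (add_mem (star_mul_self_mem_sosCone _) (star_mul_self_mem_sosCone _))
      (star_mul_self_mem_sosCone _)

/-- A positive functional `g` on the algebraic tensor product is bounded for the maximal norm,
by the GNS construction. -/
lemma le_maxNorm_of_pos (g : A ⊗[ℂ] C →ₗ[ℝ] ℝ) (hs : ∀ x, g (star x) = g x)
    (hpos : ∀ t, 0 ≤ g (star t * t)) (x : A ⊗[ℂ] C) :
    g (star x * x) ≤ maxNorm A C x ^ 2 * g 1 := by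
  obtain ⟨s, hre, hstar⟩ := exists_hermitian_functional g hs
  have hq : IsSemiInner fun u v => s (star u * v) :=
    { conj_symm := fun u v => by rw [← hstar, tensor_star_mul, star_star]
      nonneg := fun v => by rw [hre]; exact hpos v
      add_left := fun u v w => by rw [star_add, add_mul, map_add]
      smul_left := fun u v c => by rw [star_smul, smul_mul_assoc, map_smul]; rfl }
  obtain ⟨H, _, _, _, ι, hι⟩ := hq.exists_isHilbertOf
  obtain ⟨ρ, hρ⟩ := hι.exists_rep
    ((Algebra.lmul ℂ (A ⊗[ℂ] C)).comp (Algebra.TensorProduct.includeLeft : A →ₐ[ℂ] A ⊗[ℂ] C))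
    (fun a u v => by simp [tensor_star_mul, mul_assoc])
  obtain ⟨σ, hσ⟩ := hι.exists_rep
    ((Algebra.lmul ℂ (A ⊗[ℂ] C)).comp (Algebra.TensorProduct.includeRight : C →ₐ[ℂ] A ⊗[ℂ] C))
    (fun a u v => by simp [tensor_star_mul, mul_assoc])
  let p : CommutingRepPair A C :=
    { carrier := H →L[ℂ] H
      fst := ρ
      snd := σ
      commutes := fun a c => hι.ext fun v => by
        simp [hρ, hσ, ← mul_assoc] }
  have hp : ∀ x v, p.hom x (ι v) = ι (x * v) := by
    intro x v
    induction x with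
    | zero => simp
    | add x y hx hy => rw [map_add, add_apply, hx, hy, add_mul, map_add]
    | tmul a c =>
      rw [p.hom_tmul]
      change ρ a (σ c (ι v)) = _
      simp [hρ, hσ, ← mul_assoc]
  have h1 := hι.norm_sq x
  have h2 := hι.norm_sq 1
  simp only [hre, tensor_star_one, mul_one] at h1 h2
  have h3 : ‖ι x‖ ≤ maxNorm A C x * ‖ι 1‖ := by
    have h4 := hp x 1
    rw [mul_one] at h4
    rw [← h4]
    refine ((p.hom x).le_opNorm _).trans ?_
    gcongr
    exact p.norm_hom_le x
  calc g (star x * x) = ‖ι x‖ ^ 2 := h1.symm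
    _ ≤ (maxNorm A C x * ‖ι 1‖) ^ 2 := by gcongr
    _ = maxNorm A C x ^ 2 * g 1 := by rw [mul_pow]; exact congrArg _ h2

/-- The maximal norm is detected by sums of squares. -/
theorem sub_star_mul_self_mem_sosCone (x : A ⊗[ℂ] C) {ε : ℝ} (hε : 0 < ε) :
    (maxNorm A C x ^ 2 + ε) • (1 : A ⊗[ℂ] C) - star x * x ∈ sosCone A C := by
  let K : PointedCone ℝ (A ⊗[ℂ] C) :=
    { carrier := {y | y + star y ∈ sosCone A C}
      add_mem' := fun {y z} hy hz => by
        have := (sosCone A C).add_mem hy hz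
        change y + z + star (y + z) ∈ sosCone A C
        rw [star_add]
        convert this using 1
        abel
      zero_mem' := by simp
      smul_mem' := fun c y hy => by
        have h1 := smul_mem_sosCone c.2 hy
        change (c : ℝ) • y + star ((c : ℝ) • y) ∈ sosCone A C
        rw [tensor_star_real_smul, ← smul_add]
        exact h1 }
  have hK : ∀ y, y ∈ K ↔ y + star y ∈ sosCone A C := fun y => Iff.rfl
  set y := (maxNorm A C x ^ 2 + ε) • (1 : A ⊗[ℂ] C) - star x * x with hy
  have hys : star y = y := by
    rw [hy, star_sub, tensor_star_mul, star_star, tensor_star_real_smul, tensor_star_one]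
  by_cases hyK : y ∈ K
  · have h1 := smul_mem_sosCone (c := 1 / 2) (by norm_num) ((hK y).1 hyK)
    rw [hys] at h1
    convert h1 using 1
    module
  exfalso
  have h1K : (1 : A ⊗[ℂ] C) ∈ K := by
    rw [hK, tensor_star_one]
    exact add_mem one_mem_sosCone one_mem_sosCone
  obtain ⟨f, hf, hf1, hfy⟩ := exists_separating K 1 h1K (fun v => by
    obtain ⟨M, hM⟩ := exists_smul_one_sub_mem_sosCone v
    refine ⟨M / 2, ?_⟩
    rw [hK, star_add, tensor_star_real_smul, tensor_star_one]
    convert hM using 1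
    module) hyK
  have hfs : ∀ x, f (star x) = f x := by
    intro x
    have h1 := hf (x - star x) (by rw [hK, star_sub, star_star]; simp)
    have h2 := hf (star x - x) (by rw [hK, star_sub, star_star]; simp)
    rw [map_sub] at h1 h2
    linarith
  have h3 := le_maxNorm_of_pos f hfs (fun t => hf _ (by
    rw [hK, tensor_star_mul, star_star]
    exact add_mem (star_mul_self_mem_sosCone t) (star_mul_self_mem_sosCone t))) x
  rw [hy, map_sub, map_smul, hf1, smul_eq_mul] at hfy
  rw [hf1] at h3
  linarith

end SOS

/-! ### Gram matrices over a C*-algebra -/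

lemma exists_add_eq_star_mul_self {D : Type} [CStarAlgebra D] (a b : D) :
    ∃ d : D, star a * a + star b * b = star d * d := by
  let _ := CStarAlgebra.spectralOrder D
  have _ := CStarAlgebra.spectralOrderedRing D
  exact CStarAlgebra.nonneg_iff_eq_star_mul_self.1
    (add_nonneg (star_mul_self_nonneg a) (star_mul_self_nonneg b))

section Gram

set_option linter.unusedSectionVars false

variable {κ : Type} [Fintype κ] [DecidableEq κ] {A : Type} [CStarAlgebra A]

/-- The positive elements of the matrix algebra over `A`, written as Gram matrices. -/
def IsGram (P : Matrix κ κ A) : Prop := ∃ a : Matrix κ κ A, P = star a * a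

lemma IsGram.isSelfAdjoint {P : Matrix κ κ A} (hP : IsGram P) : star P = P := by
  obtain ⟨a, rfl⟩ := hP
  rw [star_mul, star_star]

lemma isGram_zero : IsGram (0 : Matrix κ κ A) := ⟨0, by simp⟩

lemma isGram_one : IsGram (1 : Matrix κ κ A) := ⟨1, by simp⟩

lemma IsGram.add {P Q : Matrix κ κ A} (hP : IsGram P) (hQ : IsGram Q) : IsGram (P + Q) := by
  let _ := CStarAlgebra.spectralOrder A
  have _ := CStarAlgebra.spectralOrderedRing A
  obtain ⟨a, rfl⟩ := hP
  obtain ⟨b, rfl⟩ := hQ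
  obtain ⟨d, hd⟩ := exists_add_eq_star_mul_self (CStarMatrix.ofMatrix a) (CStarMatrix.ofMatrix b)
  exact ⟨CStarMatrix.ofMatrix.symm d, hd⟩

lemma IsGram.sum {ι : Type} (s : Finset ι) {P : ι → Matrix κ κ A} (hP : ∀ i, IsGram (P i)) :
    IsGram (∑ i ∈ s, P i) :=
  Finset.sum_induction _ IsGram (fun _ _ => IsGram.add) isGram_zero fun i _ => hP i

lemma IsGram.smul {P : Matrix κ κ A} (hP : IsGram P) {c : ℝ} (hc : 0 ≤ c) :
    IsGram ((c : ℂ) • P) := by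
  obtain ⟨a, rfl⟩ := hP
  refine ⟨(√c : ℂ) • a, ?_⟩
  rw [star_smul, smul_mul_smul_comm, Complex.star_def, Complex.conj_ofReal, ← Complex.ofReal_mul,
    Real.mul_self_sqrt hc]

lemma isGram_row (v : κ → A) : IsGram (Matrix.of fun k l => star (v k) * v l) := by
  rcases isEmpty_or_nonempty κ with h | ⟨⟨i⟩⟩
  · exact ⟨0, by ext k; exact h.elim k⟩
  · refine ⟨Matrix.of fun m k => if m = i then v k else 0, ?_⟩
    ext k l
    simp [Matrix.mul_apply, Matrix.star_apply]

lemma exists_isGram_smul_one_add {X : Matrix κ κ A} (hX : star X = X) :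
    ∃ M : ℝ, IsGram ((M : ℂ) • (1 : Matrix κ κ A) + X) := by
  let _ := CStarAlgebra.spectralOrder A
  have _ := CStarAlgebra.spectralOrderedRing A
  have h : IsSelfAdjoint (-CStarMatrix.ofMatrix X) := by
    rw [IsSelfAdjoint, star_neg]; exact congrArg _ hX
  obtain ⟨d, hd⟩ := exists_smul_one_sub_eq h le_rfl
  rw [sub_neg_eq_add] at hd
  exact ⟨_, CStarMatrix.ofMatrix.symm d, hd⟩

/-- Small hermitian perturbations of a positive multiple of the identity are positive. -/
lemma eventually_isGram {ι : Type} {l : Filter ι} {X : ι → Matrix κ κ A}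
    (hX : ∀ i, star (X i) = X i) (hlim : ∀ k k', Tendsto (fun i => X i k k') l (𝓝 0)) {η : ℝ}
    (hη : 0 < η) : ∀ᶠ i in l, IsGram ((η : ℂ) • (1 : Matrix κ κ A) + X i) := by
  let _ := CStarAlgebra.spectralOrder A
  have _ := CStarAlgebra.spectralOrderedRing A
  have h1 : Tendsto X l (𝓝 0) := tendsto_pi_nhds.2 fun k => tendsto_pi_nhds.2 fun k' => hlim k k'
  have h2 : Tendsto (fun i => CStarMatrix.ofMatrixL (X i)) l (𝓝 0) := by
    have := (CStarMatrix.ofMatrixL (m := κ) (n := κ) (A := A)).continuous.tendsto 0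
    rw [map_zero] at this
    exact this.comp h1
  have h3 : ∀ᶠ i in l, ‖CStarMatrix.ofMatrix (X i)‖ < η := by
    have := h2.norm
    rw [norm_zero] at this
    exact this.eventually (gt_mem_nhds hη)
  filter_upwards [h3] with i hi
  have h : IsSelfAdjoint (-CStarMatrix.ofMatrix (X i)) := by
    rw [IsSelfAdjoint, star_neg]; exact congrArg _ (hX i)
  obtain ⟨d, hd⟩ := exists_smul_one_sub_eq h (M := η) (by rw [norm_neg]; exact hi.le)
  rw [sub_neg_eq_add] at hd
  exact ⟨CStarMatrix.ofMatrix.symm d, hd⟩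

end Gram

/-! ### Matrices as coefficients of tensors -/

section Coeff

variable {κ : Type} [Fintype κ] {E : Type} [AddCommGroup E] [Module ℂ E]

/-- The tensor with coefficient matrix `X` with respect to the family `w`. -/
def coeffTensor {A : Type} [CStarAlgebra A] (w : κ → κ → E) : Matrix κ κ A →ₗ[ℂ] A ⊗[ℂ] E where
  toFun X := ∑ k, ∑ l, X k l ⊗ₜ[ℂ] w k l
  map_add' X Y := by simp [TensorProduct.add_tmul, Finset.sum_add_distrib]
  map_smul' c X := by simp [TensorProduct.smul_tmul', Finset.smul_sum]

lemma coeffTensor_apply {A : Type} [CStarAlgebra A] (w : κ → κ → E) (X : Matrix κ κ A) :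
    coeffTensor w X = ∑ k, ∑ l, X k l ⊗ₜ[ℂ] w k l := rfl

lemma star_coeffTensor {A : Type} [CStarAlgebra A] [StarAddMonoid E] [StarModule ℂ E]
    {w : κ → κ → E} (hw : ∀ k l, star (w k l) = w l k) (X : Matrix κ κ A) :
    star (coeffTensor w X) = coeffTensor w (star X) := by
  rw [coeffTensor_apply, coeffTensor_apply, Finset.sum_comm, star_sum]
  refine Finset.sum_congr rfl fun k _ => ?_
  rw [star_sum]
  refine Finset.sum_congr rfl fun l _ => ?_
  rw [TensorProduct.star_tmul, hw]
  rfl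

/-- The entrywise action of a scalar matrix `r`, indexed by pairs of indices, on matrices. -/
def relOp {M : Type} [AddCommMonoid M] [Module ℂ M] (r : κ → κ → κ → κ → ℂ) (Y : Matrix κ κ M) :
    Matrix κ κ M :=
  Matrix.of fun k l => ∑ k', ∑ l', r k l k' l' • Y k' l'

/-- Whether a matrix is the coefficient matrix of the zero tensor depends only on the scalar
linear relations between the `w k l`, which are encoded by a scalar matrix `r`. -/
lemma exists_relations (w : κ → κ → E) : ∃ r : κ → κ → κ → κ → ℂ,
    (∀ k' l', ∑ k, ∑ l, r k l k' l' • w k l = 0) ∧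
    ∀ (A : Type) [CStarAlgebra A] (X : Matrix κ κ A), coeffTensor w X = 0 → X = relOp r X := by
  classical
  let Φ : Matrix κ κ ℂ →ₗ[ℂ] E :=
    { toFun := fun r => ∑ k, ∑ l, r k l • w k l
      map_add' := fun X Y => by simp [add_smul, Finset.sum_add_distrib]
      map_smul' := fun c X => by simp [mul_smul, Finset.smul_sum] }
  have hΦ : ∀ k l, Φ (Matrix.single k l 1) = w k l := by
    intro k l
    change ∑ k', ∑ l', Matrix.single k l (1 : ℂ) k' l' • w k' l' = _
    rw [Finset.sum_eq_single k, Finset.sum_eq_single l]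
    · simp
    · intro b _ hb; simp [Matrix.single, hb.symm]
    · simp
    · intro b _ hb; simp [Matrix.single, hb.symm]
    · simp
  -- a linear generalized inverse `g` of `Φ`
  obtain ⟨g₀, hg₀⟩ := Φ.rangeRestrict.exists_rightInverse_of_surjective Φ.range_rangeRestrict
  obtain ⟨g, hg⟩ := LinearMap.exists_extend g₀
  have hg' : ∀ x, Φ (g (Φ x)) = Φ x := by
    intro x
    have h1 : g (Φ x) = g₀ (Φ.rangeRestrict x) := by rw [← hg]; rfl
    have h2 := congrArg Subtype.val (LinearMap.congr_fun hg₀ (Φ.rangeRestrict x))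
    rw [h1]
    exact h2
  refine ⟨fun k l k' l' => Matrix.single k' l' 1 k l - g (w k' l') k l, ?_, ?_⟩
  · intro k' l'
    have : Φ (Matrix.single k' l' 1 - g (w k' l')) = 0 := by
      rw [map_sub, ← hΦ k' l', hg', sub_self]
    exact this
  · intro A _ X hX
    ext k l
    have h1 := congrArg (TensorProduct.rid ℂ A ∘ TensorProduct.map (LinearMap.id : A →ₗ[ℂ] A)
      ((LinearMap.proj l ∘ₗ LinearMap.proj k) ∘ₗ g : E →ₗ[ℂ] ℂ)) hX
    simp only [Function.comp_apply, map_zero, coeffTensor_apply, map_sum, TensorProduct.map_tmul,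
      TensorProduct.rid_tmul, LinearMap.id_apply] at h1
    simp only [relOp, Matrix.of_apply, sub_smul, Finset.sum_sub_distrib]
    have h2 : ∑ k', ∑ l', g (w k' l') k l • X k' l' = 0 := h1
    rw [h2, sub_zero, Finset.sum_eq_single k, Finset.sum_eq_single l]
    · simp
    · intro b _ hb; simp [Matrix.single, hb]
    · simp
    · intro b _ hb; simp [Matrix.single, hb]
    · simp

lemma sum_sum_comm {M : Type} [AddCommMonoid M] (F : κ → κ → κ → κ → M) :
    ∑ k, ∑ l, ∑ k', ∑ l', F k l k' l' = ∑ k', ∑ l', ∑ k, ∑ l, F k l k' l' := by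
  simp only [← Fintype.sum_prod_type']
  calc ∑ x : κ × κ × κ × κ, F x.1 x.2.1 x.2.2.1 x.2.2.2
      = ∑ x : κ × κ × κ × κ, F x.2.2.1 x.2.2.2 x.1 x.2.1 :=
        Fintype.sum_equiv ⟨fun x => (x.2.2.1, x.2.2.2, x.1, x.2.1),
          fun x => (x.2.2.1, x.2.2.2, x.1, x.2.1), fun _ => rfl, fun _ => rfl⟩ _ _ fun _ => rfl

lemma coeffTensor_relOp {A : Type} [CStarAlgebra A] {w : κ → κ → E}
    {r : κ → κ → κ → κ → ℂ} (hr : ∀ k' l', ∑ k, ∑ l, r k l k' l' • w k l = 0)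
    (X : Matrix κ κ A) : coeffTensor w (relOp r X) = 0 := by
  have h : coeffTensor w (relOp r X)
      = ∑ k', ∑ l', X k' l' ⊗ₜ[ℂ] ∑ k, ∑ l, r k l k' l' • w k l := by
    rw [coeffTensor_apply]
    simp only [relOp, Matrix.of_apply, TensorProduct.tmul_sum, TensorProduct.tmul_smul,
      TensorProduct.smul_tmul', TensorProduct.sum_tmul]
    rw [sum_sum_comm fun k l k' l' => (r k l k' l' • X k' l') ⊗ₜ[ℂ] w k l]
  rw [h]
  simp [hr]

end Coeff

/-! ### Lifting positivity along a relatively weakly injective inclusion -/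

section Crux

variable {A B : Type} [CStarAlgebra A] [CStarAlgebra B]

lemma maxNorm_smul_one_sub_le {C : Type} [CStarAlgebra C] (t : A ⊗[ℂ] C) :
    maxNorm A C ((maxNorm A C t ^ 2) • (1 : A ⊗[ℂ] C) - star t * t) ≤ maxNorm A C t ^ 2 := by
  refine maxNorm_le (by positivity) fun p => ?_
  let _ := CStarAlgebra.spectralOrder p.carrier
  have _ := CStarAlgebra.spectralOrderedRing p.carrier
  set M := maxNorm A C t ^ 2
  have hM : 0 ≤ M := by positivity
  obtain ⟨d, hd⟩ := exists_smul_one_sub_eq (IsSelfAdjoint.star_mul_self (p.hom t)) (M := M) (by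
    rw [CStarRing.norm_star_mul_self, ← pow_two]
    exact pow_le_pow_left₀ (norm_nonneg _) (p.norm_hom_le t) 2)
  have h1 : p.hom (M • (1 : A ⊗[ℂ] C) - star t * t)
      = (M : ℂ) • (1 : p.carrier) - star (p.hom t) * p.hom t := by
    rw [map_sub, map_mul, p.hom_star, real_smul_tensor, map_smul, map_one]
  have h2 : ‖(M : ℂ) • (1 : p.carrier)‖ ≤ M := by
    rcases subsingleton_or_nontrivial p.carrier with h | h
    · rw [Subsingleton.elim ((M : ℂ) • (1 : p.carrier)) 0, norm_zero]; exact hM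
    · rw [norm_smul, CStarRing.norm_one, mul_one, Complex.norm_real, Real.norm_of_nonneg hM]
  rw [h1]
  refine le_trans (CStarAlgebra.norm_le_norm_of_nonneg_of_le ?_ ?_) h2
  · rw [hd]; exact star_mul_self_nonneg d
  · exact sub_le_self _ (star_mul_self_nonneg _)

/-- A functional on `A ⊗ C` that is dominated by the maximal norm and attains its norm at `1`
extends to a positive functional on `B ⊗ C`. -/
lemma RWI.exists_positive_extension {j : A →⋆ₐ[ℂ] B} (hj : RWI j) (hinj : Injective j)
    {C : Type} [CStarAlgebra C] (g : A ⊗[ℂ] C →ₗ[ℝ] ℝ) (hg : ∀ x, g x ≤ maxNorm A C x)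
    (hg1 : g 1 = 1) :
    ∃ f : B ⊗[ℂ] C →ₗ[ℝ] ℝ,
      (∀ x, f (Algebra.TensorProduct.map j.toAlgHom (AlgHom.id ℂ C) x) = g x) ∧
      ∀ t, 0 ≤ f (star t * t) := by
  let J : A ⊗[ℂ] C →ₗ[ℝ] B ⊗[ℂ] C :=
    (Algebra.TensorProduct.map j.toAlgHom (AlgHom.id ℂ C)).toLinearMap.restrictScalars ℝ
  have hJ : ∀ x, J x = Algebra.TensorProduct.map j.toAlgHom (AlgHom.id ℂ C) x := fun x => rfl
  have hJinj : Injective J := by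
    have := Module.Flat.rTensor_preserves_injective_linearMap (M := C)
      (j.toAlgHom.toLinearMap : A →ₗ[ℂ] B) hinj
    exact this
  let e := LinearEquiv.ofInjective J hJinj
  obtain ⟨f, hf1, hf2⟩ := exists_extension_of_le_sublinear
    (⟨LinearMap.range J, g ∘ₗ e.symm.toLinearMap⟩ : B ⊗[ℂ] C →ₗ.[ℝ] ℝ) (maxNorm B C)
    (fun c hc x => maxNorm_smul hc x) maxNorm_add_le (by
      rintro ⟨_, x, rfl⟩
      have h1 : e.symm ⟨J x, x, rfl⟩ = x := e.symm_apply_apply x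
      change g (e.symm ⟨J x, x, rfl⟩) ≤ maxNorm B C (J x)
      rw [h1, hJ, hj C x]
      exact hg x)
  have hf : ∀ x, f (J x) = g x := by
    intro x
    have h1 : e.symm ⟨J x, x, rfl⟩ = x := e.symm_apply_apply x
    have h2 : f (J x) = g (e.symm ⟨J x, x, rfl⟩) := hf1 ⟨J x, x, rfl⟩
    rw [h2, h1]
  refine ⟨f, hf, fun t => ?_⟩
  have h1 : f 1 = 1 := by
    have h3 := hf 1
    rwa [hJ, map_one (Algebra.TensorProduct.map j.toAlgHom (AlgHom.id ℂ C)), hg1] at h3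
  have h2 := (hf2 _).trans (maxNorm_smul_one_sub_le t)
  rw [map_sub, map_smul, h1, smul_eq_mul, mul_one] at h2
  linarith

variable {κ : Type} [Fintype κ] [DecidableEq κ]

/-- The semi-inner product of the GNS construction of a functional `s` on matrices over `A`, on
`A ⊕ A^κ`: the trace of `s` on the first summand and the form given by `s` on the second. -/
def gnsForm (s : Matrix κ κ A →ₗ[ℂ] ℂ) (u v : A × (κ → A)) : ℂ :=
  s (Matrix.diagonal fun _ => star u.1 * v.1) + s (Matrix.of fun k l => star (u.2 k) * v.2 l)

lemma isSemiInner_gnsForm {s : Matrix κ κ A →ₗ[ℂ] ℂ}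
    (hs : ∀ X, s (star X) = starRingEnd ℂ (s X)) (hpos : ∀ P, IsGram P → 0 ≤ (s P).re) :
    IsSemiInner (gnsForm s) where
  conj_symm u v := by
    rw [gnsForm, gnsForm, map_add, ← hs, ← hs]
    congr 2
    · ext k l
      rw [Matrix.star_apply, Matrix.diagonal_apply, Matrix.diagonal_apply]
      by_cases h : k = l <;> simp [h, eq_comm]
    · ext k l
      simp [Matrix.star_apply]
  nonneg v := by
    rw [gnsForm, Complex.add_re]
    refine add_nonneg (hpos _ ⟨Matrix.diagonal fun _ => v.1, ?_⟩) (hpos _ (isGram_row _))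
    rw [Matrix.star_eq_conjTranspose, Matrix.diagonal_conjTranspose, Matrix.diagonal_mul_diagonal]
    rfl
  add_left u v w := by
    simp only [gnsForm, Prod.fst_add, Prod.snd_add, star_add, add_mul, Pi.add_apply]
    have h1 : (Matrix.diagonal fun _ : κ => star u.1 * w.1 + star v.1 * w.1)
        = (Matrix.diagonal fun _ => star u.1 * w.1) + Matrix.diagonal fun _ => star v.1 * w.1 :=
      (Matrix.diagonal_add _ _).symm
    have h2 : (Matrix.of fun k l => star (u.2 k) * w.2 l + star (v.2 k) * w.2 l)
        = (Matrix.of fun k l => star (u.2 k) * w.2 l)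
          + Matrix.of fun k l => star (v.2 k) * w.2 l := rfl
    rw [h1, h2, map_add, map_add]
    ring
  smul_left u v c := by
    simp only [gnsForm, Prod.smul_fst, Prod.smul_snd, star_smul, smul_mul_assoc, Pi.smul_apply]
    have h1 : (Matrix.diagonal fun _ : κ => star c • (star u.1 * v.1))
        = star c • Matrix.diagonal fun _ => star u.1 * v.1 :=
      Matrix.diagonal_smul (star c) fun _ : κ => star u.1 * v.1
    have h2 : (Matrix.of fun k l => star c • (star (u.2 k) * v.2 l))
        = star c • Matrix.of fun k l => star (u.2 k) * v.2 l := rfl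
    rw [h1, h2, map_smul, map_smul, smul_eq_mul, smul_eq_mul, ← mul_add]
    rfl

/-- Embedding of `A` into the `k`-th coordinate of the second summand of `A ⊕ A^κ`. -/
def gnsShift (A : Type) [CStarAlgebra A] (k : κ) : A × (κ → A) →ₗ[ℂ] A × (κ → A) :=
  LinearMap.inr ℂ A (κ → A) ∘ₗ LinearMap.single ℂ (fun _ => A) k ∘ₗ LinearMap.fst ℂ A (κ → A)

omit [Fintype κ] in
lemma gnsShift_apply (k : κ) (u : A × (κ → A)) : gnsShift A k u = (0, Pi.single k u.1) := rfl

omit [Fintype κ] in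
lemma gnsForm_gnsShift (s : Matrix κ κ A →ₗ[ℂ] ℂ) (k l : κ) (u v : A × (κ → A)) :
    gnsForm s (gnsShift A k u) (gnsShift A l v) = s (Matrix.single k l (star u.1 * v.1)) := by
  rw [gnsForm, gnsShift_apply, gnsShift_apply]
  have h1 : (Matrix.diagonal fun _ : κ => star (0 : A) * (0 : A)) = 0 := by simp
  have h2 : (Matrix.of fun k' l' => star ((Pi.single k u.1 : κ → A) k')
      * (Pi.single l v.1 : κ → A) l') = Matrix.single k l (star u.1 * v.1) := by
    ext k' l'
    by_cases hk : k = k' <;> by_cases hl : l = l' <;>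
      simp [Matrix.single, Pi.single_apply, hk, hl, eq_comm]
  rw [h1, map_zero, zero_add, h2]

/-- A positive functional on matrices over `A` is represented by a family of operators `S k` in
the commutant of `A`, in such a way that `s X` is the value of a vector functional on the tensor
with coefficients `X` with respect to the family `(S k)* S l`. -/
lemma exists_commutant_family {s : Matrix κ κ A →ₗ[ℂ] ℂ}
    (hs : ∀ X, s (star X) = starRingEnd ℂ (s X)) (hpos : ∀ P, IsGram P → 0 ≤ (s P).re)
    (hs1 : (s 1).re = 1) :
    ∃ (C : Type) (_ : CStarAlgebra C) (S : κ → C) (g : A ⊗[ℂ] C →ₗ[ℝ] ℝ),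
      (∀ x, g x ≤ maxNorm A C x) ∧ g 1 = 1 ∧
      (∀ X : Matrix κ κ A, g (coeffTensor (fun k l => star (S k) * S l) X) = (s X).re) ∧
      ∀ r : κ → κ → ℂ, (∀ a : A, s (Matrix.of fun k l => r k l • a) = 0) →
        ∑ k, ∑ l, r k l • (star (S k) * S l) = 0 := by
  have hq := isSemiInner_gnsForm hs hpos
  obtain ⟨H, _, _, _, ι, hι⟩ := hq.exists_isHilbertOf
  obtain ⟨ρ, hρ⟩ := hι.exists_rep (Algebra.lsmul ℂ ℂ (A × (κ → A)) : A →ₐ[ℂ] _)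
    (fun a u v => by simp [gnsForm, mul_assoc])
  have hb : ∀ (k : κ) v, (gnsForm s (gnsShift A k v) (gnsShift A k v)).re
      ≤ 1 * (gnsForm s v v).re := by
    intro k v
    rw [gnsForm_gnsShift, one_mul, gnsForm, Complex.add_re]
    have h1 : (Matrix.diagonal fun _ : κ => star v.1 * v.1)
        = Matrix.single k k (star v.1 * v.1)
          + star (Matrix.diagonal fun l => if l = k then 0 else v.1)
            * Matrix.diagonal fun l => if l = k then 0 else v.1 := by
      rw [Matrix.star_eq_conjTranspose, Matrix.diagonal_conjTranspose,
        Matrix.diagonal_mul_diagonal]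
      ext l m
      by_cases hlm : l = m
      · subst hlm
        by_cases hk : l = k
        · subst hk; simp
        · simp [Matrix.single, hk, Ne.symm hk]
      · by_cases hk : k = l
        · subst hk; simp [Matrix.single, hlm]
        · simp [Matrix.single, hlm, hk]
    have h2 := hpos _ ⟨Matrix.diagonal fun l => if l = k then 0 else v.1, rfl⟩
    have h3 := hpos _ (isGram_row v.2)
    rw [h1, map_add, Complex.add_re]
    linarith
  choose S hS using fun k => hι.exists_op (gnsShift A k) 1 (hb k)
  have hcl : IsClosed ((StarSubalgebra.centralizer ℂ (Set.range ρ) :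
      StarSubalgebra ℂ (H →L[ℂ] H)) : Set (H →L[ℂ] H)) := by
    rw [StarSubalgebra.coe_centralizer]
    exact Set.isClosed_centralizer _
  have hSC : ∀ k, S k ∈ StarSubalgebra.centralizer ℂ (Set.range ρ) := by
    intro k
    have h1 : ∀ a, ρ a * S k = S k * ρ a := fun a => hι.ext fun v => by
      change ρ a (S k (ι v)) = S k (ρ a (ι v))
      rw [hρ, hS, hS, hρ, gnsShift_apply, gnsShift_apply]
      congr 1
      simp [Algebra.lsmul_coe]
      ext l
      by_cases hl : l = k
      · subst hl; simp
      · simp [hl]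
    rw [StarSubalgebra.mem_centralizer_iff]
    rintro _ ⟨a, rfl⟩
    refine ⟨h1 a, ?_⟩
    rw [← map_star]
    exact h1 _
  let C := StarSubalgebra.centralizer ℂ (Set.range ρ)
  let _ : CStarAlgebra C := StarSubalgebra.cstarAlgebra C (h_closed := hcl)
  let p : CommutingRepPair A C :=
    { carrier := H →L[ℂ] H
      fst := ρ
      snd := C.subtype
      commutes := fun a c => (((StarSubalgebra.mem_centralizer_iff ℂ).1 c.2) _ ⟨a, rfl⟩).1 }
  let h : A × (κ → A) := (1, 0)
  have hh : ‖ι h‖ = 1 := by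
    have h1 := hι.norm_sq h
    have h2 : (Matrix.of fun k l => star ((0 : κ → A) k) * (0 : κ → A) l) = 0 := by
      ext; simp
    rw [gnsForm, h2, map_zero, add_zero, star_one, one_mul] at h1
    change _ = (s (Matrix.diagonal fun _ => 1)).re at h1
    rw [Matrix.diagonal_one, hs1] at h1
    exact (pow_eq_one_iff_of_nonneg (norm_nonneg _) two_ne_zero).1 h1
  let g : A ⊗[ℂ] C →ₗ[ℝ] ℝ :=
    { toFun := fun x => (inner ℂ (ι h) (p.hom x (ι h))).re
      map_add' := fun x y => by
        rw [map_add, ← Complex.add_re, ← inner_add_right]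
        rfl
      map_smul' := fun c x => by
        rw [real_smul_tensor, map_smul]
        change (inner ℂ (ι h) ((c : ℂ) • (p.hom x (ι h)))).re = _
        rw [inner_smul_right, Complex.re_ofReal_mul]
        rfl }
  have hg : ∀ x, g x = (inner ℂ (ι h) (p.hom x (ι h))).re := fun x => rfl
  let S' : κ → C := fun k => ⟨S k, hSC k⟩
  refine ⟨C, inferInstance, S', g, ?_, ?_, ?_, ?_⟩
  · intro x
    rw [hg]
    calc (inner ℂ (ι h) (p.hom x (ι h))).re ≤ ‖inner ℂ (ι h) (p.hom x (ι h))‖ :=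
          Complex.re_le_norm _
      _ ≤ ‖ι h‖ * ‖p.hom x (ι h)‖ := norm_inner_le_norm _ _
      _ ≤ ‖p.hom x‖ := by
          have := (p.hom x).le_opNorm (ι h)
          rw [hh, mul_one] at this
          rwa [hh, one_mul]
      _ ≤ maxNorm A C x := p.norm_hom_le x
  · rw [hg, map_one]
    change (inner ℂ (ι h) (ι h)).re = 1
    have := inner_self_eq_norm_sq (𝕜 := ℂ) (ι h)
    rw [hh] at this
    simpa using this
  · intro X
    have h1 : ∀ k l a, p.hom (a ⊗ₜ (star (S' k) * S' l)) (ι h)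
        = star (S k) (S l (ι (a • h))) := by
      intro k l a
      have h2 : p.hom (a ⊗ₜ (star (S' k) * S' l)) = (star (S k) * S l) * ρ a := by
        rw [p.hom_tmul]
        exact p.commutes a (star (S' k) * S' l)
      rw [h2]
      change star (S k) (S l (ρ a (ι h))) = _
      rw [hρ]
      rfl
    have h3 : ∀ k l a, g (a ⊗ₜ (star (S' k) * S' l)) = (s (Matrix.single k l a)).re := by
      intro k l a
      rw [hg, h1, ContinuousLinearMap.star_eq_adjoint, ContinuousLinearMap.adjoint_inner_right,
        hS, hS, hι.inner_eq, gnsForm_gnsShift]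
      simp [h]
    rw [coeffTensor_apply, map_sum]
    conv_rhs => rw [Matrix.matrix_eq_sum_single X, map_sum, Complex.re_sum]
    refine Finset.sum_congr rfl fun k _ => ?_
    rw [map_sum, map_sum, Complex.re_sum]
    exact Finset.sum_congr rfl fun l _ => h3 k l _
  · intro r hr
    refine Subtype.ext ?_
    have h1 : ((∑ k, ∑ l, r k l • (star (S' k) * S' l) : C) : H →L[ℂ] H)
        = ∑ k, ∑ l, r k l • (star (S k) * S l) := by
      change C.subtype _ = _
      simp only [map_sum, map_smul]
      rfl
    rw [h1]
    refine hι.ext fun v => ?_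
    have h2 : ∀ u, inner ℂ (ι u) ((∑ k, ∑ l, r k l • (star (S k) * S l)) (ι v)) = 0 := by
      intro u
      have h3 : (Matrix.of fun k l => r k l • (star u.1 * v.1))
          = ∑ k, ∑ l, r k l • Matrix.single k l (star u.1 * v.1) := by
        rw [Matrix.matrix_eq_sum_single (Matrix.of fun k l => r k l • (star u.1 * v.1))]
        simp [Matrix.smul_single]
      have h4 := hr (star u.1 * v.1)
      rw [h3] at h4
      rw [← h4]
      simp only [map_sum, map_smul, sum_apply, inner_sum]
      refine Finset.sum_congr rfl fun k _ => Finset.sum_congr rfl fun l _ => ?_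
      change inner ℂ (ι u) (r k l • (star (S k) (S l (ι v)))) = _
      rw [inner_smul_right, ContinuousLinearMap.star_eq_adjoint,
        ContinuousLinearMap.adjoint_inner_right, hS, hS, hι.inner_eq, gnsForm_gnsShift, smul_eq_mul]
    exact Dense.eq_zero_of_inner_right ℂ hι.dense fun w hw => by
      obtain ⟨u, rfl⟩ := hw
      exact h2 u

end Crux

/-! ### Transferring positive decompositions from `B` to `A` -/

section Transfer

variable {A B : Type} [CStarAlgebra A] [CStarAlgebra B]
  {κ : Type} [Fintype κ] [DecidableEq κ]

omit [Fintype κ] [DecidableEq κ] in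
lemma matrix_star_real_smul (c : ℝ) (X : Matrix κ κ A) : star (c • X) = c • star X := by
  ext k l
  simp [Matrix.star_apply, star_smul]

lemma IsGram.real_smul {P : Matrix κ κ A} (hP : IsGram P) {c : ℝ} (hc : 0 ≤ c) :
    IsGram (c • P) := by
  have h : c • P = (c : ℂ) • P := by
    ext k l
    exact (Complex.coe_smul c (P k l)).symm
  rw [h]
  exact hP.smul hc

omit [DecidableEq κ] in
/-- The image of a Gram matrix in `B ⊗ C` under a family of hermitian squares is a sum of
hermitian squares. -/
lemma coeffTensor_isGram_mem_sosCone {C : Type} [CStarAlgebra C] {P : Matrix κ κ B} (hP : IsGram P)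
    (S : κ → C) : coeffTensor (fun k l => star (S k) * S l) P ∈ sosCone B C := by
  obtain ⟨a, rfl⟩ := hP
  have h : coeffTensor (fun k l => star (S k) * S l) (star a * a)
      = ∑ m, star (∑ k, a m k ⊗ₜ[ℂ] S k) * ∑ l, a m l ⊗ₜ[ℂ] S l := by
    rw [coeffTensor_apply]
    simp only [Matrix.mul_apply, TensorProduct.sum_tmul, star_sum, Finset.sum_mul_sum,
      TensorProduct.star_tmul, Algebra.TensorProduct.tmul_mul_tmul, Matrix.star_apply]
    exact (Finset.sum_congr rfl fun k _ => Finset.sum_comm).trans Finset.sum_comm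
  rw [h]
  exact sum_mem fun m _ => star_mul_self_mem_sosCone _

/-- If the tensor with coefficients `X` is positive over `B`, in the sense of having a Gram
matrix of coefficients, then it is approximately positive over `A`. Otherwise it would be
separated from the positive tensors by a functional, which is represented by a commuting pair for
`A` and hence extends to `B`. -/
theorem RWI.exists_isGram {j : A →⋆ₐ[ℂ] B} (hrwi : RWI j) (hinj : Injective j)
    {E : Type} [AddCommGroup E] [Module ℂ E] [StarAddMonoid E] [StarModule ℂ E]
    {w : κ → κ → E} (hw : ∀ k l, star (w k l) = w l k)
    {X : Matrix κ κ A} (hX : star X = X) {P : Matrix κ κ B} (hP : IsGram P)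
    (h : coeffTensor w (X.map j - P) = 0) {δ : ℝ} (hδ : 0 < δ) :
    ∃ P' : Matrix κ κ A, IsGram P' ∧ coeffTensor w (X + (δ : ℂ) • 1 - P') = 0 := by
  let K : PointedCone ℝ (Matrix κ κ A) :=
    { carrier := {Y | ∃ Q, IsGram Q ∧ coeffTensor w (Y + star Y - Q) = 0}
      add_mem' := by
        rintro Y Z ⟨Q, hQ, hYQ⟩ ⟨R, hR, hZR⟩
        refine ⟨Q + R, hQ.add hR, ?_⟩
        have h1 : Y + Z + star (Y + Z) - (Q + R) = (Y + star Y - Q) + (Z + star Z - R) := by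
          rw [star_add]
          abel
        rw [h1, map_add, hYQ, hZR, add_zero]
      zero_mem' := ⟨0, isGram_zero, by simp⟩
      smul_mem' := by
        rintro c Y ⟨Q, hQ, hYQ⟩
        refine ⟨(c : ℝ) • Q, hQ.real_smul c.2, ?_⟩
        change coeffTensor w ((c : ℝ) • Y + star ((c : ℝ) • Y) - (c : ℝ) • Q) = 0
        have h1 : (c : ℝ) • Y + star ((c : ℝ) • Y) - (c : ℝ) • Q
            = ((c : ℝ) : ℂ) • (Y + star Y - Q) := by
          rw [matrix_star_real_smul, ← smul_add, ← smul_sub]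
          ext k l
          exact (Complex.coe_smul (c : ℝ) _).symm
        rw [h1, map_smul, hYQ, smul_zero] }
  have hK : ∀ Y, Y ∈ K ↔ ∃ Q, IsGram Q ∧ coeffTensor w (Y + star Y - Q) = 0 := fun Y => Iff.rfl
  have hc : ∀ (c : ℝ) (Y : Matrix κ κ A), (c : ℂ) • Y = c • Y := by
    intro c Y
    ext k l
    exact Complex.coe_smul c (Y k l)
  have hys : star (X + (δ : ℂ) • (1 : Matrix κ κ A)) = X + (δ : ℂ) • 1 := by
    rw [star_add, hX, hc, matrix_star_real_smul, star_one]
  by_cases hyK : X + (δ : ℂ) • (1 : Matrix κ κ A) ∈ K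
  · obtain ⟨Q, hQ, h1⟩ := (hK _).1 hyK
    refine ⟨(1 / 2 : ℝ) • Q, hQ.real_smul (by norm_num), ?_⟩
    have h2 : X + (δ : ℂ) • 1 - (1 / 2 : ℝ) • Q = ((1 / 2 : ℝ) : ℂ) •
        (X + (δ : ℂ) • 1 + star (X + (δ : ℂ) • (1 : Matrix κ κ A)) - Q) := by
      rw [hys, hc, hc]
      module
    rw [h2, map_smul, h1, smul_zero]
  exfalso
  have hGK : ∀ Q : Matrix κ κ A, IsGram Q → Q ∈ K := fun Q hQ =>
    (hK Q).2 ⟨Q + Q, hQ.add hQ, by rw [hQ.isSelfAdjoint]; simp⟩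
  obtain ⟨f, hf, hf1, hfy⟩ := exists_separating K 1 (hGK 1 isGram_one) (fun Y => by
    obtain ⟨M, hM⟩ := exists_isGram_smul_one_add (X := Y + star Y)
      (by rw [star_add, star_star, add_comm])
    refine ⟨M / 2, (hK _).2 ⟨_, hM, ?_⟩⟩
    rw [star_add, matrix_star_real_smul, star_one, hc]
    have h1 : (M / 2) • (1 : Matrix κ κ A) + Y + ((M / 2) • 1 + star Y)
        - (M • 1 + (Y + star Y)) = 0 := by module
    rw [h1, map_zero]) hyK
  have hfker : ∀ Y, coeffTensor w Y = 0 → f Y = 0 := by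
    intro Y hY
    have h0 : ∀ Z : Matrix κ κ A, coeffTensor w Z = 0 → Z ∈ K := fun Z hZ =>
      (hK Z).2 ⟨0, isGram_zero, by
        rw [sub_zero, map_add, ← star_coeffTensor hw, hZ, star_zero, add_zero]⟩
    have h1 := hf _ (h0 Y hY)
    have h2 := hf _ (h0 (-Y) (by rw [map_neg, hY, neg_zero]))
    rw [map_neg] at h2
    linarith
  have hfs : ∀ Y, f (star Y) = f Y := by
    intro Y
    have h1 := hf (Y - star Y) ((hK _).2 ⟨0, isGram_zero, by rw [star_sub, star_star]; simp⟩)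
    have h2 := hf (star Y - Y) ((hK _).2 ⟨0, isGram_zero, by rw [star_sub, star_star]; simp⟩)
    rw [map_sub] at h1 h2
    linarith
  have hfX : f X < 0 := by
    rw [map_add, hc, map_smul, hf1, smul_eq_mul, mul_one] at hfy
    linarith
  obtain ⟨s, hre, hstar⟩ := exists_hermitian_functional f hfs
  obtain ⟨C, _, S, g, hg, hg1, hgX, hSr⟩ := exists_commutant_family hstar
    (fun Q hQ => by rw [hre]; exact hf _ (hGK Q hQ)) (by rw [hre, hf1])
  obtain ⟨f', hf', hpos⟩ := hrwi.exists_positive_extension hinj g hg hg1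
  obtain ⟨r, hr, hrX⟩ := exists_relations w
  have hsker : ∀ Y, coeffTensor w Y = 0 → s Y = 0 := by
    intro Y hY
    have h1 := hre Y
    have h2 := hre (Complex.I • Y)
    rw [hfker Y hY] at h1
    rw [hfker _ (by rw [map_smul, hY, smul_zero]), map_smul, smul_eq_mul, Complex.I_mul_re] at h2
    exact Complex.ext h1 (by simpa using h2)
  -- the operators representing `s` satisfy the linear relations between the `w k l`
  have hT : ∀ k' l', ∑ k, ∑ l, r k l k' l' • (star (S k) * S l) = 0 := by
    intro k' l'
    refine hSr (fun k l => r k l k' l') fun a => hsker _ ?_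
    have h1 : coeffTensor w (Matrix.of fun k l => r k l k' l' • a)
        = a ⊗ₜ ∑ k, ∑ l, r k l k' l' • w k l := by
      simp [coeffTensor_apply, TensorProduct.tmul_sum, TensorProduct.smul_tmul]
    rw [h1, hr, TensorProduct.tmul_zero]
  have h2 : coeffTensor (fun k l => star (S k) * S l) (X.map j - P) = 0 :=
    hrX B _ h ▸ coeffTensor_relOp hT (X.map j - P)
  have h3 : Algebra.TensorProduct.map j.toAlgHom (AlgHom.id ℂ C)
      (coeffTensor (fun k l => star (S k) * S l) X)
      = coeffTensor (fun k l => star (S k) * S l) (X.map j) := by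
    simp [coeffTensor_apply]
  have h4 : 0 ≤ f' (coeffTensor (fun k l => star (S k) * S l) P) := by
    have h5 := coeffTensor_isGram_mem_sosCone hP S
    generalize coeffTensor (fun k l => star (S k) * S l) P = z at h5
    induction h5 using AddSubmonoid.closure_induction with
    | mem x hx => obtain ⟨t, rfl⟩ := hx; exact hpos t
    | zero => simp
    | add x y _ _ hx hy => rw [map_add]; exact add_nonneg hx hy
  rw [map_sub, sub_eq_zero] at h2
  rw [← h2, ← h3, hf', hgX, hre] at h4
  linarith

end Transfer

/-! ### Decompositions with norm control -/

section Bounded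

variable {A B : Type} [CStarAlgebra A] [CStarAlgebra B]
  {κ : Type} [Fintype κ] [DecidableEq κ]
  {E : Type} [AddCommGroup E] [Module ℂ E]

/-- A family extending `w` by one index, such that the `ℂ`-component of a tensor records the
trace of its coefficient matrix. -/
def traceFamily (w : κ → κ → E) : Option κ → Option κ → E × ℂ
  | some k, some l => (w k l, if k = l then 1 else 0)
  | none, none => (0, 1)
  | some _, none => 0
  | none, some _ => 0

/-- The block diagonal matrix with blocks `x` and `X`. -/
def blockMatrix (x : A) (X : Matrix κ κ A) : Matrix (Option κ) (Option κ) A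
  | some k, some l => X k l
  | none, none => x
  | some _, none => 0
  | none, some _ => 0

lemma fst_coeffTensor_traceFamily (w : κ → κ → E) (X : Matrix (Option κ) (Option κ) A) :
    TensorProduct.map LinearMap.id (LinearMap.fst ℂ E ℂ) (coeffTensor (traceFamily w) X)
      = coeffTensor w (X.submatrix some some) := by
  simp [coeffTensor_apply, Fintype.sum_option, traceFamily]

lemma snd_coeffTensor_traceFamily (w : κ → κ → E) (X : Matrix (Option κ) (Option κ) A) :
    TensorProduct.rid ℂ A
        (TensorProduct.map LinearMap.id (LinearMap.snd ℂ E ℂ) (coeffTensor (traceFamily w) X))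
      = ∑ m, X m m := by
  simp [coeffTensor_apply, Fintype.sum_option, traceFamily]

lemma coeffTensor_traceFamily_eq_zero {w : κ → κ → E} {X : Matrix (Option κ) (Option κ) A}
    (h1 : coeffTensor w (X.submatrix some some) = 0) (h2 : ∑ m, X m m = 0) :
    coeffTensor (traceFamily w) X = 0 := by
  have h : coeffTensor (traceFamily w) X
      = TensorProduct.map LinearMap.id (LinearMap.inl ℂ E ℂ)
          (coeffTensor w (X.submatrix some some))
        + (∑ m, X m m) ⊗ₜ (0, 1) := by
    have h3 : ∀ k l, (w k l, if k = l then (1 : ℂ) else 0)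
        = (w k l, 0) + if k = l then ((0 : E), (1 : ℂ)) else 0 := by
      intro k l
      split_ifs <;> simp
    simp only [coeffTensor_apply, Fintype.sum_option, traceFamily, h3, TensorProduct.tmul_add]
    simp [Finset.sum_add_distrib, TensorProduct.add_tmul, TensorProduct.sum_tmul,
      TensorProduct.tmul_ite]
    abel
  rw [h, h1, h2, map_zero, TensorProduct.zero_tmul, add_zero]

lemma norm_sq_le_of_sum_eq {ι : Type} [Fintype ι] (a : ι → ι → A) {c : ℝ} (hc : 0 ≤ c)
    (h : ∑ m, ∑ n, star (a n m) * a n m = (c : ℂ) • 1) (m n : ι) : ‖a n m‖ ^ 2 ≤ c := by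
  let _ := CStarAlgebra.spectralOrder A
  have _ := CStarAlgebra.spectralOrderedRing A
  have h2 : ‖(c : ℂ) • (1 : A)‖ ≤ c := by
    rcases subsingleton_or_nontrivial A with h | h
    · rw [Subsingleton.elim ((c : ℂ) • (1 : A)) 0, norm_zero]; exact hc
    · rw [norm_smul, CStarRing.norm_one, mul_one, Complex.norm_real, Real.norm_of_nonneg hc]
  rw [pow_two, ← CStarRing.norm_star_mul_self]
  refine le_trans (CStarAlgebra.norm_le_norm_of_nonneg_of_le (star_mul_self_nonneg _) ?_) h2
  rw [← h]
  calc star (a n m) * a n m ≤ ∑ n, star (a n m) * a n m :=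
        Finset.single_le_sum (f := fun n => star (a n m) * a n m)
          (fun _ _ => star_mul_self_nonneg _) (Finset.mem_univ n)
    _ ≤ _ := Finset.single_le_sum (f := fun m => ∑ n, star (a n m) * a n m)
          (fun _ _ => Finset.sum_nonneg fun _ _ => star_mul_self_nonneg _) (Finset.mem_univ m)

/-- In `RWI.exists_isGram` the entries of the square root can be bounded in terms of the trace
of the given Gram matrix over `B`. -/
theorem RWI.exists_bounded {j : A →⋆ₐ[ℂ] B} (hrwi : RWI j) (hinj : Injective j)
    [StarAddMonoid E] [StarModule ℂ E]
    {w : κ → κ → E} (hw : ∀ k l, star (w k l) = w l k)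
    {X : Matrix κ κ A} (hX : star X = X) {P : Matrix κ κ B} (hP : IsGram P)
    (h : coeffTensor w (X.map j - P) = 0) {R : ℝ} (hR : ‖∑ k, P k k‖ ≤ R) {δ : ℝ} (hδ : 0 < δ) :
    ∃ a : Option κ → κ → A, (∀ m k, ‖a m k‖ ^ 2 ≤ R + (Fintype.card κ + 1) * δ) ∧
      coeffTensor w (X + (δ : ℂ) • 1 - Matrix.of fun k l => ∑ m, star (a m k) * a m l) = 0 := by
  have hR0 : 0 ≤ R := (norm_nonneg _).trans hR
  have hPs := hP.isSelfAdjoint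
  have htr : ∀ {D : Type} [CStarAlgebra D] {Y : Matrix κ κ D}, star Y = Y →
      IsSelfAdjoint (∑ k, Y k k) := by
    intro D _ Y hY
    rw [IsSelfAdjoint, star_sum]
    exact Finset.sum_congr rfl fun k _ => congrFun (congrFun hY k) k
  obtain ⟨d, hd⟩ := exists_smul_one_sub_eq (htr hPs) hR
  obtain ⟨b, hb⟩ := hP
  have hw' : ∀ k l, star (traceFamily w k l) = traceFamily w l k := by
    rintro (_ | k) (_ | l)
    · exact Prod.ext (star_zero _) (star_one _)
    · exact star_zero _
    · exact star_zero _
    · refine Prod.ext (hw k l) ?_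
      change star (if k = l then (1 : ℂ) else 0) = if l = k then 1 else 0
      by_cases hkl : k = l
      · subst hkl; simp
      · simp [hkl, Ne.symm hkl]
  obtain ⟨Q, ⟨a, hQ⟩, hQX⟩ := hrwi.exists_isGram hinj hw'
    (X := blockMatrix ((R : ℂ) • 1 - ∑ k, X k k) X)
    (P := blockMatrix ((R : ℂ) • 1 - ∑ k, P k k) P) (by
      ext k l
      rcases k with _ | k <;> rcases l with _ | l
      · change star ((R : ℂ) • (1 : A) - ∑ k, X k k) = _
        rw [star_sub, (htr hX).star_eq, star_smul, star_one, Complex.star_def, Complex.conj_ofReal]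
        rfl
      · exact star_zero _
      · exact star_zero _
      · exact congrFun (congrFun hX k) l) (by
      refine ⟨blockMatrix d b, ?_⟩
      ext k l
      rcases k with _ | k <;> rcases l with _ | l <;>
        simp only [Matrix.mul_apply, Fintype.sum_option, blockMatrix, Matrix.star_apply]
      · simp [-Complex.coe_smul, hd]
      · simp
      · simp
      · rw [hb]; simp [Matrix.mul_apply, Matrix.star_apply]) (by
      refine coeffTensor_traceFamily_eq_zero h ?_
      simp [Fintype.sum_option, blockMatrix, -Complex.coe_smul, map_smul]) hδ
  refine ⟨fun m k => a m (some k), fun m k => ?_, ?_⟩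
  · have h1 := snd_coeffTensor_traceFamily w
      (blockMatrix ((R : ℂ) • 1 - ∑ k, X k k) X + (δ : ℂ) • 1 - Q)
    rw [hQX, map_zero, map_zero] at h1
    refine norm_sq_le_of_sum_eq (fun m n => a m n) (by positivity) ?_ (some k) m
    simp only [Matrix.sub_apply, Matrix.add_apply, Finset.sum_sub_distrib, hQ, Matrix.mul_apply,
      Matrix.star_apply] at h1
    rw [eq_comm, sub_eq_zero] at h1
    rw [← h1, Finset.sum_add_distrib, Fintype.sum_option]
    simp [blockMatrix, add_smul, mul_smul, Nat.cast_smul_eq_nsmul]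
  · have h1 := fst_coeffTensor_traceFamily w
      (blockMatrix ((R : ℂ) • 1 - ∑ k, X k k) X + (δ : ℂ) • 1 - Q)
    rw [hQX, map_zero] at h1
    rw [h1]
    congr 1
    ext k l
    simp [blockMatrix, hQ, Matrix.mul_apply, Matrix.star_apply, Matrix.one_apply]

end Bounded

/-! ### Existence of ultrapowers -/

section Ultrapower

variable {I : Type} (U : Ultrafilter I) (B : Type) [CStarAlgebra B]

/-- The bounded families in `B`. -/
def bddSubalgebra (I B : Type) [CStarAlgebra B] : StarSubalgebra ℂ (I → B) where
  carrier := {f | Bdd f}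
  mul_mem' := by
    rintro f g ⟨M, hM⟩ ⟨N, hN⟩
    exact ⟨M * N, fun i => (norm_mul_le _ _).trans
      (mul_le_mul (hM i) (hN i) (norm_nonneg _) ((norm_nonneg _).trans (hM i)))⟩
  add_mem' := by
    rintro f g ⟨M, hM⟩ ⟨N, hN⟩
    exact ⟨M + N, fun i => (norm_add_le _ _).trans (add_le_add (hM i) (hN i))⟩
  algebraMap_mem' c := ⟨‖algebraMap ℂ B c‖, fun _ => le_rfl⟩
  star_mem' := by
    rintro f ⟨M, hM⟩
    exact ⟨M, fun i => (norm_star (f i)).trans_le (hM i)⟩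

/-- The bounded families in `B`, to be endowed with the seminorm `lim_U ‖f i‖`. -/
def BddFamily (_ : Ultrafilter I) (B : Type) [CStarAlgebra B] : Type := bddSubalgebra I B

instance : Ring (BddFamily U B) := inferInstanceAs (Ring (bddSubalgebra I B))

instance : Algebra ℂ (BddFamily U B) := inferInstanceAs (Algebra ℂ (bddSubalgebra I B))

instance : StarRing (BddFamily U B) := inferInstanceAs (StarRing (bddSubalgebra I B))

instance : StarModule ℂ (BddFamily U B) := inferInstanceAs (StarModule ℂ (bddSubalgebra I B))

variable {B}

lemma Bdd.exists_tendsto {f : I → B} (hf : Bdd (A := fun _ => B) f) :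
    ∃ L : ℝ, Tendsto (fun i => ‖f i‖) U (𝓝 L) := by
  obtain ⟨M, hM⟩ := hf
  obtain ⟨L, _, hL⟩ := (isCompact_Icc (a := (0 : ℝ)) (b := M)).ultrafilter_le_nhds'
    (U.map fun i => ‖f i‖)
    (show ∀ᶠ i in U, ‖f i‖ ∈ Set.Icc 0 M from .of_forall fun i => ⟨norm_nonneg _, hM i⟩)
  exact ⟨L, hL⟩

variable {U}

lemma BddFamily.bdd (f : BddFamily U B) : Bdd (A := fun _ => B) f.1 := f.2

/-- The limit of the norms of a bounded family. -/
def BddFamily.lim (f : BddFamily U B) : ℝ := (f.bdd.exists_tendsto U).choose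

lemma BddFamily.tendsto_lim (f : BddFamily U B) :
    Tendsto (fun i => ‖f.1 i‖) U (𝓝 f.lim) := (f.bdd.exists_tendsto U).choose_spec

lemma BddFamily.lim_eq {f : BddFamily U B} {L : ℝ} (h : Tendsto (fun i => ‖f.1 i‖) U (𝓝 L)) :
    f.lim = L := tendsto_nhds_unique f.tendsto_lim h

instance : SeminormedRing (BddFamily U B) :=
  RingSeminorm.toSeminormedRing
    { toFun := BddFamily.lim
      map_zero' := BddFamily.lim_eq <| by
        change Tendsto (fun _ => ‖(0 : B)‖) _ _
        rw [norm_zero]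
        exact tendsto_const_nhds
      add_le' := fun f g => le_of_tendsto_of_tendsto' (f + g).tendsto_lim
        (f.tendsto_lim.add g.tendsto_lim) fun i => norm_add_le (f.1 i) (g.1 i)
      neg' := fun f => BddFamily.lim_eq <| f.tendsto_lim.congr fun i => (norm_neg (f.1 i)).symm
      mul_le' := fun f g => le_of_tendsto_of_tendsto' (f * g).tendsto_lim
        (f.tendsto_lim.mul g.tendsto_lim) fun i => norm_mul_le (f.1 i) (g.1 i) }

lemma BddFamily.norm_def (f : BddFamily U B) : ‖f‖ = f.lim := rfl

instance : NormedAlgebra ℂ (BddFamily U B) where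
  norm_smul_le c f := le_of_eq <| BddFamily.lim_eq <|
    (f.tendsto_lim.const_mul ‖c‖).congr fun i => (norm_smul c (f.1 i)).symm

instance : NormedStarGroup (BddFamily U B) where
  norm_star_le f := le_of_eq <| BddFamily.lim_eq <|
    f.tendsto_lim.congr fun i => (norm_star (f.1 i)).symm

lemma BddFamily.norm_le {f : BddFamily U B} {M : ℝ} (h : ∀ i, ‖f.1 i‖ ≤ M) : ‖f‖ ≤ M :=
  le_of_tendsto' f.tendsto_lim h

variable (U B) in
/-- The ultrapower of `B`. -/
abbrev UltraPower : Type := SeparationQuotient (BddFamily U B)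

namespace UltraPower

open SeparationQuotient

instance : Star (UltraPower U B) where
  star := SeparationQuotient.lift (fun f => SeparationQuotient.mk (star f)) fun _ _ h =>
    mk_eq_mk.2 (h.map continuous_star)

lemma mk_star (f : BddFamily U B) :
    (mk (star f) : UltraPower U B) = star (mk f : UltraPower U B) := rfl

instance : StarRing (UltraPower U B) where
  star_involutive x := by
    obtain ⟨f, rfl⟩ := surjective_mk x
    rw [← mk_star, ← mk_star, star_star]
  star_mul x y := by
    obtain ⟨f, rfl⟩ := surjective_mk x
    obtain ⟨g, rfl⟩ := surjective_mk y
    rw [← mk_mul, ← mk_star, ← mk_star, ← mk_star, star_mul, mk_mul]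
  star_add x y := by
    obtain ⟨f, rfl⟩ := surjective_mk x
    obtain ⟨g, rfl⟩ := surjective_mk y
    rw [← mk_add, ← mk_star, ← mk_star, ← mk_star, star_add, mk_add]

instance : StarModule ℂ (UltraPower U B) where
  star_smul c x := by
    obtain ⟨f, rfl⟩ := surjective_mk x
    rw [← mk_smul, ← mk_star, ← mk_star, star_smul, mk_smul]

instance : CStarRing (UltraPower U B) where
  norm_mul_self_le x := by
    obtain ⟨f, rfl⟩ := surjective_mk x
    rw [← mk_star, ← mk_mul, norm_mk, norm_mk]
    refine le_of_eq (BddFamily.lim_eq ?_).symm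
    exact (f.tendsto_lim.mul f.tendsto_lim).congr fun i =>
      (CStarRing.norm_star_mul_self (x := f.1 i)).symm

/-- Elements of the ultrapower have representatives with norms bounded by the norm of the class,
obtained by rescaling the entries which are too large. -/
lemma exists_rep (x : UltraPower U B) :
    ∃ f : BddFamily U B, (∀ i, ‖f.1 i‖ ≤ ‖x‖) ∧ (mk f : UltraPower U B) = x := by
  obtain ⟨g, rfl⟩ := surjective_mk x
  set L := ‖(mk g : UltraPower U B)‖ with hL
  have hL0 : 0 ≤ L := norm_nonneg _
  have hg : Tendsto (fun i => ‖g.1 i‖) U (𝓝 L) := g.tendsto_lim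
  let F : I → B := fun i => ((min 1 (L / ‖g.1 i‖) : ℝ) : ℂ) • g.1 i
  have hc : ∀ i, 0 ≤ min 1 (L / ‖g.1 i‖) := fun i => le_min zero_le_one (by positivity)
  have hF : ∀ i, ‖F i‖ ≤ L := by
    intro i
    rw [norm_smul, Complex.norm_real, Real.norm_of_nonneg (hc i)]
    rcases eq_or_ne ‖g.1 i‖ 0 with h | h
    · rw [h, mul_zero]; exact hL0
    · exact (mul_le_mul_of_nonneg_right (min_le_right _ _) (norm_nonneg _)).trans_eq
        (div_mul_cancel₀ _ h)
  have hFg : ∀ i, ‖F i - g.1 i‖ ≤ |‖g.1 i‖ - L| := by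
    intro i
    have h1 : F i - g.1 i = ((min 1 (L / ‖g.1 i‖) - 1 : ℝ) : ℂ) • g.1 i := by
      rw [Complex.ofReal_sub, sub_smul, Complex.ofReal_one, one_smul]
    rw [h1, norm_smul, Complex.norm_real, Real.norm_eq_abs]
    rcases le_total ‖g.1 i‖ L with h | h
    · rcases eq_or_ne ‖g.1 i‖ 0 with h0 | h0
      · rw [h0, mul_zero]; exact abs_nonneg _
      · have h2 : 1 ≤ L / ‖g.1 i‖ :=
          (one_le_div (lt_of_le_of_ne (norm_nonneg _) (Ne.symm h0))).2 h
        rw [min_eq_left h2]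
        simp
    · rcases eq_or_ne ‖g.1 i‖ 0 with h0 | h0
      · rw [h0, mul_zero]; exact abs_nonneg _
      · have h2 : L / ‖g.1 i‖ ≤ 1 := div_le_one_of_le₀ h (norm_nonneg _)
        rw [min_eq_right h2, abs_of_nonpos (by linarith), abs_of_nonneg (by linarith)]
        refine le_of_eq ?_
        field_simp
        ring
  let f : BddFamily U B := ⟨F, L, hF⟩
  refine ⟨f, hF, ?_⟩
  rw [← sub_eq_zero, ← mk_sub, ← norm_eq_zero, norm_mk]
  refine BddFamily.lim_eq (squeeze_zero (fun _ => norm_nonneg _) hFg ?_)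
  have h3 := (hg.sub_const L).abs
  rwa [sub_self, abs_zero] at h3

instance : CompleteSpace (UltraPower U B) := by
  refine NormedAddCommGroup.completeSpace_of_summable_imp_tendsto fun a ha => ?_
  choose f hf hfa using fun n => exists_rep (a n)
  have hs : ∀ i, Summable fun n => (f n).1 i := fun i =>
    Summable.of_norm_bounded ha fun n => hf n i
  let F : BddFamily U B := ⟨fun i => ∑' n, (f n).1 i, ∑' n, ‖a n‖, fun i =>
    tsum_of_norm_bounded ha.hasSum fun n => hf n i⟩
  refine ⟨mk F, tendsto_iff_norm_sub_tendsto_zero.2 ?_⟩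
  refine squeeze_zero (fun _ => norm_nonneg _) (fun n => ?_)
    (tendsto_sum_nat_add fun n => ‖a n‖)
  have h1 : ∑ k ∈ Finset.range n, a k = mk (∑ k ∈ Finset.range n, f k) := by
    have := map_sum (mkAddMonoidHom : BddFamily U B →+ UltraPower U B) f (Finset.range n)
    rw [← funext hfa]
    exact this.symm
  rw [h1, norm_sub_rev, ← mk_sub, norm_mk]
  refine BddFamily.norm_le fun i => ?_
  have h2 : (F - ∑ k ∈ Finset.range n, f k).1 i = ∑' k, (f (k + n)).1 i := by
    have h3 : (∑ k ∈ Finset.range n, f k).1 i = ∑ k ∈ Finset.range n, (f k).1 i := by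
      have := map_sum ((Pi.evalAddMonoidHom (fun _ : I => B) i).comp
        ((bddSubalgebra I B).subtype : bddSubalgebra I B →+ (I → B))) f (Finset.range n)
      exact this
    change (∑' n, (f n).1 i) - (∑ k ∈ Finset.range n, f k).1 i = _
    rw [h3, ← (hs i).sum_add_tsum_nat_add n, add_sub_cancel_left]
  rw [h2]
  exact tsum_of_norm_bounded ((summable_nat_add_iff n).2 ha).hasSum fun k => hf _ i

instance : CStarAlgebra (UltraPower U B) where

end UltraPower

variable (U B) in
open UltraPower SeparationQuotient Classical in
/-- Every C*-algebra has an ultrapower. -/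
theorem exists_isCStarUltraproduct :
    ∃ (Q : Type) (_ : CStarAlgebra Q) (ρ : (I → B) → Q),
      IsCStarUltraproduct U (fun _ => B) Q ρ := by
  let ρ : (I → B) → UltraPower U B := fun f =>
    if h : Bdd (A := fun _ => B) f then mk (⟨f, h⟩ : BddFamily U B) else 0
  have hρ : ∀ f : BddFamily U B, ρ f.1 = mk f := fun f => dif_pos f.bdd
  refine ⟨UltraPower U B, inferInstance, ρ, ?_, ?_, ?_, ?_, ?_, ?_, ?_⟩
  · exact hρ 1
  · intro f g hf hg
    rw [hρ ⟨f, hf⟩, hρ ⟨g, hg⟩]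
    exact hρ (⟨f, hf⟩ + ⟨g, hg⟩)
  · intro f g hf hg
    rw [hρ ⟨f, hf⟩, hρ ⟨g, hg⟩]
    exact hρ (⟨f, hf⟩ * ⟨g, hg⟩)
  · intro f hf
    rw [hρ ⟨f, hf⟩]
    exact hρ (star ⟨f, hf⟩)
  · intro c f hf
    rw [hρ ⟨f, hf⟩]
    exact hρ (c • ⟨f, hf⟩)
  · intro f hf
    rw [hρ ⟨f, hf⟩]
    exact BddFamily.tendsto_lim ⟨f, hf⟩
  · intro b
    obtain ⟨f, hf, hfb⟩ := exists_rep b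
    exact ⟨f.1, hf, (hρ f).trans hfb⟩

end Ultrapower

/-! ### Ultrapowers of inclusions -/

section UltraInclusion

variable {I : Type} {U : Ultrafilter I} {A B Q R : Type} [CStarAlgebra A] [CStarAlgebra B]
  [CStarAlgebra Q] [CStarAlgebra R] {π : (I → A) → Q} {ρ : (I → B) → R}

namespace IsCStarUltraproduct

/-- The quotient map of an ultrapower, as a *-homomorphism on bounded families. -/
def hom (h : IsCStarUltraproduct U (fun _ => A) Q π) : bddSubalgebra I A →⋆ₐ[ℂ] Q where
  toFun f := π f.1
  map_one' := h.map_one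
  map_mul' f g := h.map_mul f.1 g.1 f.2 g.2
  map_zero' := by
    have h1 := h.map_add 0 0 (bddSubalgebra I A).zero_mem (bddSubalgebra I A).zero_mem
    rw [add_zero] at h1
    exact left_eq_add.1 h1
  map_add' f g := h.map_add f.1 g.1 f.2 g.2
  commutes' c := by
    have h1 := h.map_smul c 1 (bddSubalgebra I A).one_mem
    rw [h.map_one] at h1
    rw [Algebra.algebraMap_eq_smul_one, Algebra.algebraMap_eq_smul_one]
    exact h1
  map_star' f := h.map_star f.1 f.2

lemma hom_apply (h : IsCStarUltraproduct U (fun _ => A) Q π) (f : bddSubalgebra I A) :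
    h.hom f = π f.1 := rfl

lemma hom_surjective (h : IsCStarUltraproduct U (fun _ => A) Q π) : Surjective h.hom := fun b => by
  obtain ⟨f, hf, hfb⟩ := h.surj b
  exact ⟨⟨f, _, hf⟩, hfb⟩

lemma hom_eq_zero_iff (h : IsCStarUltraproduct U (fun _ => A) Q π) (f : bddSubalgebra I A) :
    h.hom f = 0 ↔ Tendsto (fun i => f.1 i) U (𝓝 0) := by
  have h1 := h.norm_eq f.1 f.2
  rw [tendsto_zero_iff_norm_tendsto_zero, ← norm_eq_zero]
  constructor
  · intro h2
    rw [hom_apply] at h2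
    rwa [h2] at h1
  · intro h2
    exact tendsto_nhds_unique h1 h2

end IsCStarUltraproduct

/-- The entrywise application of a *-homomorphism to bounded families. -/
def bddMap (I : Type) (j : A →⋆ₐ[ℂ] B) : bddSubalgebra I A →⋆ₐ[ℂ] bddSubalgebra I B where
  toFun f := ⟨fun i => j (f.1 i), by
    obtain ⟨M, hM⟩ := f.2
    exact ⟨M, fun i => (NonUnitalStarAlgHom.norm_apply_le j _).trans (hM i)⟩⟩
  map_one' := Subtype.ext <| funext fun i => map_one j
  map_mul' f g := Subtype.ext <| funext fun i => map_mul j _ _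
  map_zero' := Subtype.ext <| funext fun i => map_zero j
  map_add' f g := Subtype.ext <| funext fun i => map_add j _ _
  commutes' c := Subtype.ext <| funext fun i => j.commutes' c
  map_star' f := Subtype.ext <| funext fun i => map_star j _

/-- Evaluation of bounded families. -/
def bddEval (A : Type) [CStarAlgebra A] (i : I) : bddSubalgebra I A →⋆ₐ[ℂ] A where
  toFun f := f.1 i
  map_one' := rfl
  map_mul' _ _ := rfl
  map_zero' := rfl
  map_add' _ _ := rfl
  commutes' _ := rfl
  map_star' _ := rfl

/-- An injective *-homomorphism induces an injective *-homomorphism of ultrapowers. -/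
theorem exists_ultrapowerMap (hπ : IsCStarUltraproduct U (fun _ => A) Q π)
    (hρ : IsCStarUltraproduct U (fun _ => B) R ρ) {j : A →⋆ₐ[ℂ] B} (hinj : Injective j) :
    ∃ J : Q →⋆ₐ[ℂ] R, Injective J ∧ ∀ f, J (hπ.hom f) = hρ.hom (bddMap I j f) := by
  have hker : ∀ f, hπ.hom f = 0 ↔ hρ.hom (bddMap I j f) = 0 := by
    intro f
    rw [hπ.hom_eq_zero_iff, hρ.hom_eq_zero_iff]
    exact tendsto_zero_iff_norm_tendsto_zero.trans ((tendsto_congr fun i =>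
      (NonUnitalStarAlgHom.norm_map j hinj (f.1 i)).symm).trans
      tendsto_zero_iff_norm_tendsto_zero.symm)
  choose s hs using hπ.hom_surjective
  have hJ : ∀ f, hρ.hom (bddMap I j (s (hπ.hom f))) = hρ.hom (bddMap I j f) := by
    intro f
    rw [← sub_eq_zero, ← map_sub, ← map_sub, ← hker, map_sub, hs, sub_self]
  let J : Q →⋆ₐ[ℂ] R :=
    { toFun := fun x => hρ.hom (bddMap I j (s x))
      map_one' := by rw [← map_one hπ.hom, hJ, map_one, map_one]
      map_mul' := fun x y => by
        rw [← map_mul, ← map_mul, ← hJ (s x * s y), map_mul, hs, hs]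
      map_zero' := by rw [← map_zero hπ.hom, hJ, map_zero, map_zero]
      map_add' := fun x y => by
        rw [← map_add, ← map_add, ← hJ (s x + s y), map_add, hs, hs]
      commutes' := fun c => by
        rw [← AlgHomClass.commutes hπ.hom c, hJ, AlgHomClass.commutes, AlgHomClass.commutes]
      map_star' := fun x => by
        rw [← map_star, ← map_star, ← hJ (star (s x)), map_star, hs] }
  refine ⟨J, (injective_iff_map_eq_zero J).2 fun x hx => ?_, hJ⟩
  rw [← hs x]
  exact (hker _).2 hx

section Matrices

variable {κ : Type} [Fintype κ] [DecidableEq κ] {S T : Type} [Ring S] [StarRing S] [Algebra ℂ S]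
  [Ring T] [StarRing T] [Algebra ℂ T]

/-- The entrywise application of a *-homomorphism to matrices. -/
def matMap (κ : Type) [Fintype κ] [DecidableEq κ] (φ : S →⋆ₐ[ℂ] T) :
    Matrix κ κ S →⋆ₐ[ℂ] Matrix κ κ T :=
  { φ.toAlgHom.mapMatrix with
    map_star' := fun X => by
      ext k l
      exact map_star φ (X l k) }

lemma matMap_apply (φ : S →⋆ₐ[ℂ] T) (X : Matrix κ κ S) (k l : κ) :
    matMap κ φ X k l = φ (X k l) := rfl

lemma matMap_relOp (φ : S →⋆ₐ[ℂ] T) (r : κ → κ → κ → κ → ℂ) (X : Matrix κ κ S) :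
    matMap κ φ (relOp r X) = relOp r (matMap κ φ X) := by
  ext k l
  simp [matMap_apply, relOp]

lemma star_half : star ((1 / 2 : ℝ) : ℂ) = ((1 / 2 : ℝ) : ℂ) := by
  rw [Complex.star_def, Complex.conj_ofReal]

lemma half_add_half : ((1 / 2 : ℝ) : ℂ) + ((1 / 2 : ℝ) : ℂ) = 1 := by
  rw [← Complex.ofReal_add]; norm_num

lemma exists_hermitian_lift [StarModule ℂ S] (φ : S →⋆ₐ[ℂ] T) (hφ : Surjective φ)
    {X : Matrix κ κ T} (hX : star X = X) : ∃ Y, star Y = Y ∧ matMap κ φ Y = X := by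
  choose s hs using hφ
  have h1 : matMap κ φ (X.map s) = X := by ext k l; exact hs _
  refine ⟨((1 / 2 : ℝ) : ℂ) • (X.map s + star (X.map s)), ?_, ?_⟩
  · rw [star_smul, star_add, star_star, star_half, add_comm]
  · rw [map_smul, map_add, map_star, h1, hX, smul_add, ← add_smul, half_add_half, one_smul]

variable {E : Type} [AddCommGroup E] [Module ℂ E] [StarAddMonoid E] [StarModule ℂ E]

/-- A hermitian matrix whose image is a relation agrees, in the image, with a hermitian matrix
that is itself a relation under every *-homomorphism. -/
lemma exists_hermitian_relation [StarModule ℂ S] {w : κ → κ → E} (hw : ∀ k l, star (w k l) = w l k)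
    {r : κ → κ → κ → κ → ℂ} (hr : ∀ k' l', ∑ k, ∑ l, r k l k' l' • w k l = 0)
    (φ : S →⋆ₐ[ℂ] T) {D : Matrix κ κ S}
    (hDs : star D = D) (hD : matMap κ φ D = relOp r (matMap κ φ D)) :
    ∃ N, star N = N ∧ matMap κ φ N = matMap κ φ D ∧
      ∀ (V : Type) [CStarAlgebra V] (ψ : S →⋆ₐ[ℂ] V), coeffTensor w (matMap κ ψ N) = 0 := by
  refine ⟨((1 / 2 : ℝ) : ℂ) • (relOp r D + star (relOp r D)), ?_, ?_, fun V _ ψ => ?_⟩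
  · rw [star_smul, star_add, star_star, star_half, add_comm]
  · rw [map_smul, map_add, map_star, matMap_relOp, ← hD, ← map_star, hDs, smul_add, ← add_smul,
      half_add_half, one_smul]
  · rw [map_smul, map_smul, map_add, map_add, map_star, ← star_coeffTensor hw, matMap_relOp,
      coeffTensor_relOp hr, star_zero, add_zero, smul_zero]

end Matrices

variable {κ : Type} [Fintype κ] [DecidableEq κ] {E : Type} [AddCommGroup E] [Module ℂ E]
  [StarAddMonoid E] [StarModule ℂ E]

/-- A matrix over the ultrapower of `A` that is positive modulo relations over the ultrapower of
`B` has a lift to bounded families whose entries are, up to `δ`, positive modulo relations over `A`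
for almost all indices, with a uniform bound on the square roots. Half of `δ` absorbs the error in
lifting from the ultrapower to `B`, the other half is used by `RWI.exists_bounded`. -/
theorem RWI.exists_lift_eventually {j : A →⋆ₐ[ℂ] B} (hrwi : RWI j) (hinj : Injective j)
    (hπ : IsCStarUltraproduct U (fun _ => A) Q π) (hρ : IsCStarUltraproduct U (fun _ => B) R ρ)
    {J : Q →⋆ₐ[ℂ] R} (hJ : ∀ f, J (hπ.hom f) = hρ.hom (bddMap I j f))
    {w : κ → κ → E} (hw : ∀ k l, star (w k l) = w l k)
    {X : Matrix κ κ Q} (hX : star X = X) {P : Matrix κ κ R} (hP : IsGram P)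
    (h : coeffTensor w (X.map J - P) = 0) {δ : ℝ} (hδ : 0 < δ) :
    ∃ (X₁ : Matrix κ κ (bddSubalgebra I A)) (c : ℝ), matMap κ hπ.hom X₁ = X ∧
      ∀ᶠ i in U, ∃ a : Option κ → κ → A, (∀ m k, ‖a m k‖ ^ 2 ≤ c) ∧
        coeffTensor w (matMap κ (bddEval A i) X₁ + (δ : ℂ) • 1
          - Matrix.of fun k l => ∑ m, star (a m k) * a m l) = 0 := by
  classical
  obtain ⟨b, rfl⟩ := hP
  obtain ⟨r, hr, hrX⟩ := exists_relations w
  obtain ⟨X₁, hX₁s, hX₁⟩ := exists_hermitian_lift hπ.hom hπ.hom_surjective hX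
  obtain ⟨b₀, hb₀⟩ : ∃ b₀, matMap κ hρ.hom b₀ = b := by
    choose t ht using hρ.hom_surjective
    exact ⟨b.map t, by ext k l; exact ht _⟩
  obtain ⟨D, hDdef⟩ : ∃ D, D = matMap κ (bddMap I j) X₁ - star b₀ * b₀ := ⟨_, rfl⟩
  have hDs : star D = D := by
    rw [hDdef, star_sub, star_mul, star_star, ← map_star, hX₁s]
  have hD : matMap κ hρ.hom D = X.map J - star b * b := by
    have h1 : matMap κ hρ.hom (matMap κ (bddMap I j) X₁) = X.map J := by
      rw [← hX₁]
      ext k l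
      exact (hJ _).symm
    rw [hDdef, map_sub, h1, map_mul, map_star, hb₀]
  obtain ⟨N, hNs, hN, hNi⟩ := exists_hermitian_relation hw hr hρ.hom hDs (by
    rw [hD]
    exact hrX R _ h)
  set η := δ / 2 with hη
  have hη0 : 0 < η := half_pos hδ
  obtain ⟨P₁, hP₁⟩ : ∃ P₁, P₁ = star b₀ * b₀ + ((η : ℂ) • 1 + (D - N)) := ⟨_, rfl⟩
  have hgram : ∀ᶠ i in U, IsGram (matMap κ (bddEval B i) P₁) := by
    have h1 := eventually_isGram (l := (U : Filter I))
      (X := fun i => matMap κ (bddEval B i) (D - N)) (fun i => by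
        rw [← map_star, star_sub, hDs, hNs]) (fun k l => by
        refine (hρ.hom_eq_zero_iff ((D - N) k l)).1 ?_
        have h2 : matMap κ hρ.hom (D - N) = 0 := by rw [map_sub, hN, sub_self]
        exact congrFun (congrFun h2 k) l) hη0
    filter_upwards [h1] with i hi
    rw [hP₁, map_add, map_add, map_mul, map_star, map_smul, map_one]
    exact IsGram.add ⟨_, rfl⟩ hi
  obtain ⟨M, hM⟩ := (∑ k, P₁ k k).2
  have hM' : ∀ i, ‖∑ k, matMap κ (bddEval B i) P₁ k k‖ ≤ M := by
    intro i
    have h1 : ∑ k, matMap κ (bddEval B i) P₁ k k = bddEval B i (∑ k, P₁ k k) :=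
      (map_sum (bddEval B i) (fun k => P₁ k k) Finset.univ).symm
    rw [h1]
    exact hM i
  refine ⟨X₁, M + (Fintype.card κ + 1) * η, hX₁, ?_⟩
  filter_upwards [hgram] with i hi
  obtain ⟨a, ha, haX⟩ := hrwi.exists_bounded hinj hw
    (X := matMap κ (bddEval A i) (X₁ + (η : ℂ) • 1)) (by
      rw [← map_star, star_add, hX₁s, star_smul, star_one, Complex.star_def,
        Complex.conj_ofReal]) hi (by
      have h1 : (matMap κ (bddEval A i) (X₁ + (η : ℂ) • 1)).map j
          = matMap κ (bddEval B i) (matMap κ (bddMap I j) (X₁ + (η : ℂ) • 1)) := rfl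
      rw [h1, ← map_sub, ← hNi B (bddEval B i), map_add, map_smul, map_one, hP₁, hDdef]
      congr 2
      abel) (hM' i) hη0
  refine ⟨a, ha, ?_⟩
  rw [← haX, map_add, map_smul, map_one, add_assoc, ← add_smul, ← Complex.ofReal_add, hη,
    add_halves]

/-- The ultrapower of a relatively weakly injective inclusion inherits the approximate positivity
statement of `RWI.exists_isGram`, with a positive matrix over `A^U` that is the class of the
uniformly bounded solutions over `A`. -/
theorem RWI.exists_ultrapower {j : A →⋆ₐ[ℂ] B} (hrwi : RWI j) (hinj : Injective j)
    (hπ : IsCStarUltraproduct U (fun _ => A) Q π) (hρ : IsCStarUltraproduct U (fun _ => B) R ρ)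
    {J : Q →⋆ₐ[ℂ] R} (hJ : ∀ f, J (hπ.hom f) = hρ.hom (bddMap I j f))
    {w : κ → κ → E} (hw : ∀ k l, star (w k l) = w l k)
    {X : Matrix κ κ Q} (hX : star X = X) {P : Matrix κ κ R} (hP : IsGram P)
    (h : coeffTensor w (X.map J - P) = 0) {δ : ℝ} (hδ : 0 < δ) :
    ∃ a : Option κ → κ → Q,
      coeffTensor w (X + (δ : ℂ) • 1 - Matrix.of fun k l => ∑ m, star (a m k) * a m l) = 0 := by
  classical
  obtain ⟨X₁, c, hX₁, hgood⟩ := hrwi.exists_lift_eventually hinj hπ hρ hJ hw hX hP h hδ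
  obtain ⟨r, hr, hrX⟩ := exists_relations w
  obtain ⟨v, hvb, hv⟩ : ∃ v : I → Option κ → κ → A, (∀ i m k, ‖v i m k‖ ≤ √c) ∧
      ∀ᶠ i in U, coeffTensor w (matMap κ (bddEval A i) X₁ + (δ : ℂ) • 1
        - Matrix.of fun k l => ∑ m, star (v i m k) * v i m l) = 0 := by
    have h1 : ∀ i, ∃ a : Option κ → κ → A, (∀ m k, ‖a m k‖ ≤ √c) ∧
        ((∃ a : Option κ → κ → A, (∀ m k, ‖a m k‖ ^ 2 ≤ c) ∧
          coeffTensor w (matMap κ (bddEval A i) X₁ + (δ : ℂ) • 1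
            - Matrix.of fun k l => ∑ m, star (a m k) * a m l) = 0) →
        coeffTensor w (matMap κ (bddEval A i) X₁ + (δ : ℂ) • 1
          - Matrix.of fun k l => ∑ m, star (a m k) * a m l) = 0) := by
      intro i
      by_cases hi : ∃ a : Option κ → κ → A, (∀ m k, ‖a m k‖ ^ 2 ≤ c) ∧
          coeffTensor w (matMap κ (bddEval A i) X₁ + (δ : ℂ) • 1
            - Matrix.of fun k l => ∑ m, star (a m k) * a m l) = 0
      · obtain ⟨a, ha, haX⟩ := hi
        exact ⟨a, fun m k => Real.le_sqrt_of_sq_le (ha m k), fun _ => haX⟩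
      · exact ⟨0, fun m k => by simp, fun h => absurd h hi⟩
    choose v hvb hv using h1
    exact ⟨v, hvb, hgood.mono hv⟩
  obtain ⟨α, hα⟩ : ∃ α : Option κ → κ → bddSubalgebra I A,
      ∀ m k i, bddEval A i (α m k) = v i m k :=
    ⟨fun m k => ⟨fun i => v i m k, √c, fun i => hvb i m k⟩, fun _ _ _ => rfl⟩
  obtain ⟨Y, hYdef⟩ : ∃ Y, Y = X₁ + (δ : ℂ) • 1
      - Matrix.of fun k l => ∑ m, star (α m k) * α m l := ⟨_, rfl⟩
  have hY : ∀ᶠ i in U, coeffTensor w (matMap κ (bddEval A i) Y) = 0 := by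
    filter_upwards [hv] with i hi
    rw [← hi, hYdef, map_sub, map_add, map_smul, map_one]
    congr 2
    ext k l
    rw [matMap_apply, Matrix.of_apply, Matrix.of_apply, map_sum]
    refine Finset.sum_congr rfl fun m _ => ?_
    rw [map_mul, map_star, hα, hα]
  have hYr : matMap κ hπ.hom Y = relOp r (matMap κ hπ.hom Y) := by
    rw [← matMap_relOp, ← sub_eq_zero, ← map_sub]
    ext k l
    refine (hπ.hom_eq_zero_iff ((Y - relOp r Y) k l)).2 ?_
    refine tendsto_const_nhds.congr' ?_
    filter_upwards [hY] with i hi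
    have h1 : matMap κ (bddEval A i) (Y - relOp r Y) = 0 := by
      rw [map_sub, matMap_relOp, sub_eq_zero]
      exact hrX A _ hi
    exact (congrFun (congrFun h1 k) l).symm
  refine ⟨fun m k => hπ.hom (α m k), ?_⟩
  have h1 : X + (δ : ℂ) • 1 - Matrix.of (fun k l => ∑ m, star (hπ.hom (α m k)) * hπ.hom (α m l))
      = matMap κ hπ.hom Y := by
    rw [hYdef, map_sub, map_add, map_smul, map_one, hX₁]
    congr 1
    ext k l
    rw [matMap_apply, Matrix.of_apply, Matrix.of_apply, map_sum]
    simp only [map_mul, map_star]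
  rw [h1, hYr]
  exact coeffTensor_relOp hr _

end UltraInclusion

/-! ### Relative weak injectivity of the ultrapower -/

section Final

lemma norm_sq_le_of_add_sum_eq {D ι : Type} [CStarAlgebra D] [Fintype ι] {y h : D} {z : ι → D}
    {μ : ℝ} (hμ : 0 ≤ μ) (hy : star y * y + ∑ m, star (z m) * z m = (μ : ℂ) • 1 + h) :
    ‖y‖ ^ 2 ≤ μ + ‖h‖ := by
  let _ := CStarAlgebra.spectralOrder D
  have _ := CStarAlgebra.spectralOrderedRing D
  have h1 : star y * y ≤ (μ : ℂ) • 1 + h := by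
    rw [← hy]
    exact le_add_of_nonneg_right (Finset.sum_nonneg fun m _ => star_mul_self_nonneg _)
  have h2 : ‖((μ : ℂ) • (1 : D))‖ ≤ μ := by
    rcases subsingleton_or_nontrivial D with h | h
    · rw [Subsingleton.elim ((μ : ℂ) • (1 : D)) 0, norm_zero]
      exact hμ
    · rw [norm_smul, CStarRing.norm_one, mul_one, Complex.norm_real, Real.norm_of_nonneg hμ]
  rw [pow_two, ← CStarRing.norm_star_mul_self]
  refine (CStarAlgebra.norm_le_norm_of_nonneg_of_le (star_mul_self_nonneg y) h1).trans ?_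
  refine (norm_add_le _ _).trans ?_
  gcongr

lemma coeffTensor_row {κ A C : Type} [Fintype κ] [CStarAlgebra A] [CStarAlgebra C] (d : κ → C)
    (v : κ → A) :
    coeffTensor (fun k l => star (d k) * d l) (Matrix.of fun k l => star (v k) * v l)
      = star (∑ k, v k ⊗ₜ[ℂ] d k) * ∑ k, v k ⊗ₜ[ℂ] d k := by
  rw [coeffTensor_apply, star_sum, Finset.sum_mul_sum]
  simp only [Matrix.of_apply, TensorProduct.star_tmul, Algebra.TensorProduct.tmul_mul_tmul]

lemma coeffTensor_row_sum {κ ι A C : Type} [Fintype κ] [Fintype ι] [CStarAlgebra A]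
    [CStarAlgebra C] (d : κ → C) (v : ι → κ → A) :
    coeffTensor (fun k l => star (d k) * d l)
        (Matrix.of fun k l => ∑ m, star (v m k) * v m l)
      = ∑ m, star (∑ k, v m k ⊗ₜ[ℂ] d k) * ∑ k, v m k ⊗ₜ[ℂ] d k := by
  have h1 : (Matrix.of fun k l => ∑ m, star (v m k) * v m l)
      = ∑ m, (Matrix.of fun k l => star (v m k) * v m l) := by
    ext k l
    simp [Matrix.sum_apply]
  rw [h1, map_sum]
  exact Finset.sum_congr rfl fun m _ => coeffTensor_row d (v m)

lemma exists_sum_of_mem_sosCone {A C : Type} [CStarAlgebra A] [CStarAlgebra C] {z : A ⊗[ℂ] C}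
    (hz : z ∈ sosCone A C) : ∃ (n : ℕ) (t : Fin n → A ⊗[ℂ] C), z = ∑ m, star (t m) * t m := by
  obtain ⟨L, hL, rfl⟩ := AddSubmonoid.exists_list_of_mem_closure hz
  choose t ht using fun i : Fin L.length => hL L[i] (List.getElem_mem _)
  refine ⟨L.length, t, ?_⟩
  rw [← Fin.sum_univ_getElem]
  exact Finset.sum_congr rfl fun i _ => (ht i).symm

/-- Finitely many tensors with second factors in `C` can be written over a common family of
elements of `C` whose first member is `1`. -/
lemma exists_common_family {A B C : Type} [CStarAlgebra A] [CStarAlgebra B] [CStarAlgebra C]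
    (x : A ⊗[ℂ] C) {n : ℕ} (t : Fin n → B ⊗[ℂ] C) :
    ∃ (κ : Type) (_ : Fintype κ) (d : Option κ → C) (a : Option κ → A)
      (b : Fin n → Option κ → B), d none = 1 ∧ x = ∑ k, a k ⊗ₜ[ℂ] d k ∧
        ∀ m, t m = ∑ k, b m k ⊗ₜ[ℂ] d k := by
  obtain ⟨n₀, a, c, hx⟩ := TensorProduct.exists_sum_tmul_eq x
  choose N b e ht using fun m => TensorProduct.exists_sum_tmul_eq (t m)
  refine ⟨Fin n₀ ⊕ Σ m, Fin (N m), inferInstance,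
    fun k => k.elim 1 (Sum.elim c fun y => e y.1 y.2),
    fun k => k.elim 0 (Sum.elim a fun _ => 0),
    fun m k => k.elim 0 (Sum.elim (fun _ => 0) fun y => if y.1 = m then b y.1 y.2 else 0),
    rfl, ?_, fun m => ?_⟩
  · rw [hx]
    simp [Fintype.sum_option]
  · rw [ht m]
    simp only [Fintype.sum_option, Option.elim, Fintype.sum_sum_type, Sum.elim_inl, Sum.elim_inr,
      TensorProduct.zero_tmul, Finset.sum_const_zero, zero_add, Fintype.sum_sigma]
    rw [Finset.sum_eq_single m]
    · simp
    · intro m' _ hm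
      simp [hm]
    · simp

/-- The ultrapower of a relatively weakly injective inclusion is relatively weakly injective. -/
theorem RWI.ultrapower {I : Type} {U : Ultrafilter I} {A B Q R : Type} [CStarAlgebra A]
    [CStarAlgebra B] [CStarAlgebra Q] [CStarAlgebra R] {π : (I → A) → Q} {ρ : (I → B) → R}
    {j : A →⋆ₐ[ℂ] B} (hrwi : RWI j) (hinj : Injective j)
    (hπ : IsCStarUltraproduct U (fun _ => A) Q π) (hρ : IsCStarUltraproduct U (fun _ => B) R ρ)
    {J : Q →⋆ₐ[ℂ] R} (hJ : ∀ f, J (hπ.hom f) = hρ.hom (bddMap I j f)) : RWI J := by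
  classical
  intro C _ x
  refine le_antisymm (maxNorm_map_le J x) ?_
  set y := Algebra.TensorProduct.map J.toAlgHom (AlgHom.id ℂ C) x with hy
  refine maxNorm_le (maxNorm_nonneg y) fun p => abs_le_of_sq_le_sq' ?_ (maxNorm_nonneg y) |>.2
  refine le_of_forall_pos_le_add fun ε hε => ?_
  set μ := maxNorm R C y ^ 2 + ε with hμ
  have hμ0 : 0 ≤ μ := by positivity
  obtain ⟨n, t, hz⟩ := exists_sum_of_mem_sosCone (sub_star_mul_self_mem_sosCone y hε)
  obtain ⟨κ, _, d, a, b, hd, hx, ht⟩ := exists_common_family x t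
  have hw : ∀ k l, star (star (d k) * d l) = star (d l) * d k := fun k l => by
    rw [star_mul, star_star]
  obtain ⟨w, hwdef⟩ : ∃ w : Option κ → Option κ → C, w = fun k l => star (d k) * d l := ⟨_, rfl⟩
  have hunit : ∀ (V : Type) [CStarAlgebra V],
      coeffTensor w (Matrix.of fun k l : Option κ =>
        star ((Pi.single none 1 : Option κ → V) k) * (Pi.single none 1 : Option κ → V) l) = 1 := by
    intro V _
    have h1 : ∑ k, (Pi.single none 1 : Option κ → V) k ⊗ₜ[ℂ] d k = 1 := by
      rw [Fintype.sum_option, Pi.single_eq_same, hd, ← Algebra.TensorProduct.one_def]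
      simp
    rw [hwdef, coeffTensor_row, h1, tensor_star_one, mul_one]
  have hyJ : y = ∑ k, J (a k) ⊗ₜ[ℂ] d k := by
    rw [hy, hx, map_sum]
    rfl
  -- the coefficient matrix of `μ - x* x`
  obtain ⟨X, hX⟩ : ∃ X : Matrix (Option κ) (Option κ) Q, X = (μ : ℂ) • (Matrix.of fun k l =>
      star ((Pi.single none 1 : Option κ → Q) k) * (Pi.single none 1 : Option κ → Q) l)
      - Matrix.of fun k l => star (a k) * a l := ⟨_, rfl⟩
  have hXs : star X = X := by
    rw [hX, star_sub, star_smul, Complex.star_def, Complex.conj_ofReal,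
      (isGram_row _).isSelfAdjoint, (isGram_row _).isSelfAdjoint]
  have hXx : coeffTensor w X = (μ : ℂ) • 1 - star x * x := by
    rw [hX, map_sub, map_smul, hunit, hwdef, coeffTensor_row, ← hx]
  have hXJ : X.map J = (μ : ℂ) • (Matrix.of fun k l =>
      star ((Pi.single none 1 : Option κ → R) k) * (Pi.single none 1 : Option κ → R) l)
      - Matrix.of fun k l => star (J (a k)) * J (a l) := by
    have h1 : ∀ k, J ((Pi.single none 1 : Option κ → Q) k) = (Pi.single none 1 : Option κ → R) k := by
      intro k
      rcases k with _ | k <;> simp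
    ext k l
    simp only [hX, Matrix.map_apply, Matrix.sub_apply, Matrix.smul_apply, Matrix.of_apply, map_sub,
      map_smul, map_mul, map_star, h1]
  have hP : IsGram (∑ m, Matrix.of fun k l => star (b m k) * b m l) :=
    IsGram.sum _ fun m => isGram_row (b m)
  have h0 : coeffTensor w (X.map J - ∑ m, Matrix.of fun k l => star (b m k) * b m l) = 0 := by
    have h1 : ∀ m, coeffTensor w (Matrix.of fun k l => star (b m k) * b m l)
        = star (t m) * t m := fun m => by
      rw [hwdef, coeffTensor_row, ← ht]
    rw [map_sub, map_sum, Finset.sum_congr rfl fun m _ => h1 m, ← hz, hXJ, map_sub, map_smul,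
      hunit, hwdef, coeffTensor_row, ← hyJ, real_smul_tensor, sub_self]
  -- it remains to let the error term tend to zero
  obtain ⟨u, hu⟩ : ∃ u : Q ⊗[ℂ] C, u = coeffTensor w 1 := ⟨_, rfl⟩
  have key : ∀ δ : ℝ, 0 < δ → ‖p.hom x‖ ^ 2 ≤ μ + δ * ‖p.hom u‖ := by
    intro δ hδ
    obtain ⟨v, hv⟩ := hrwi.exists_ultrapower hinj hπ hρ hJ
      (w := w) (by rw [hwdef]; exact hw) hXs hP h0 hδ
    rw [map_sub, map_add, hXx, map_smul, ← hu, hwdef, coeffTensor_row_sum, sub_eq_zero] at hv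
    have h2 := congrArg p.hom hv
    simp only [map_add, map_sub, map_smul, map_one, map_sum, map_mul, p.hom_star] at h2
    have h3 := norm_sq_le_of_add_sum_eq (y := p.hom x) (h := (δ : ℂ) • p.hom u)
      (z := fun m => ∑ k, p.hom (v m k ⊗ₜ[ℂ] d k)) hμ0 (by rw [← h2]; abel)
    rwa [norm_smul, Complex.norm_real, Real.norm_of_nonneg hδ.le] at h3
  refine le_of_forall_pos_le_add fun η hη => ?_
  refine (key (η / (‖p.hom u‖ + 1)) (by positivity)).trans ?_
  gcongr
  rw [div_mul_eq_mul_div, div_le_iff₀ (by positivity)]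
  nlinarith [norm_nonneg (p.hom u)]

/-- A relatively weakly injective inclusion is isometric on both sides of the maximal tensor
product. -/
lemma RWI.maxNorm_sum {A B : Type} [CStarAlgebra A] [CStarAlgebra B] {j : A →⋆ₐ[ℂ] B}
    (hj : RWI j) {n : ℕ} (f g : Fin n → A) :
    maxNorm B B (∑ k, j (f k) ⊗ₜ[ℂ] j (g k)) = maxNorm A A (∑ k, f k ⊗ₜ[ℂ] g k) := by
  have h1 := hj A (∑ k, f k ⊗ₜ[ℂ] g k)
  have h2 := hj B (∑ k, g k ⊗ₜ[ℂ] j (f k))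
  have h3 := maxNorm_comm (∑ k, j (f k) ⊗ₜ[ℂ] g k)
  have h4 := maxNorm_comm (∑ k, j (g k) ⊗ₜ[ℂ] j (f k))
  simp only [map_sum, Algebra.TensorProduct.map_tmul, Algebra.TensorProduct.comm_tmul,
    AlgHom.id_apply] at h1 h2 h3 h4
  exact h4.trans (h2.trans (h3.trans h1))

end Final

/-- If `B` has property max-`U` and `A ⊆ B` is a relatively weakly
injective inclusion, then `A` has property max-`U`. -/
theorem hasMaxU_of_rwi {I : Type} (U : Ultrafilter I) (A B : Type)
    [CStarAlgebra A] [CStarAlgebra B] (j : A →⋆ₐ[ℂ] B) (hinj : Injective j)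
    (hrwi : RWI j) (hB : HasMaxU U B) : HasMaxU U A := by
  intro Q _ π hπ n f g hf hg
  obtain ⟨R, _, ρ, hρ⟩ := exists_isCStarUltraproduct U B
  obtain ⟨J, -, hJ⟩ := exists_ultrapowerMap hπ hρ hinj
  have hb : ∀ v : Fin n → I → A, (∀ k, Bdd (v k)) → ∀ k, Bdd (fun i => j (v k i)) :=
    fun v hv k => (bddMap I j ⟨v k, hv k⟩).2
  have h1 := hB R ρ hρ n (fun k i => j (f k i)) (fun k i => j (g k i)) (hb f hf) (hb g hg)
  have h2 : ∀ v : Fin n → I → A, (∀ k, Bdd (v k)) → ∀ k, ρ (fun i => j (v k i)) = J (π (v k)) :=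
    fun v hv k => (hJ ⟨v k, hv k⟩).symm
  simp only [h2 f hf, h2 g hg, hrwi.maxNorm_sum,
    (hrwi.ultrapower hinj hπ hρ hJ).maxNorm_sum] at h1
  exact h1

end
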